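/- arXiv:2508.01163 — 4 statements merged into one kernel-verified Lean document; each statement's English description precedes it below -/
import Mathlib

section
/- Every planar finite simple graph G satisfies 2·n⁺(G) ≤ n⁻(G)·(n⁻(G) + 1). -/
/-!
The theorem holds for every graph without a `K₅` minor, and a planar graph has none.

*Planar graphs have no `K₅` minor.* Suppose that `K₅` is mapped to the plane with disjoint edges
having disjoint images. For disjoint edges `ab` and `cd`, the difference of the two arcs is a nowhere
vanishing function on the square, so it has a continuous logarithm, whose increments along the four
sides cancel. Each increment is the winding of an edge around a vertex, an integer multiple of `2πi` up
to chosen logarithms of the differences of vertices. The fifteen resulting relations are inconsistent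
modulo `4` (`no_K5_drawing`, `SimpleGraph.IsPlanar.not_hasK5`).

*Sparsity.* By Mader's theorem a graph on `n ≥ 3` vertices without a `K₅` minor has at most `3n - 6`
edges (`SimpleGraph.mader`).

*Reduction step.* The numbers of positive and negative eigenvalues are the largest dimensions of
subspaces on which the adjacency form is positive, respectively negative, definite. All arguments are
about such subspaces of vectors supported on a vertex set `S` (`PosBound`, `NegBound`, `NonposBound`).
Deleting a non-isolated vertex and its neighbours lowers the negative index by at least one, and the
positive index by at most the degree of the vertex. By sparsity that degree can be taken to be at most
`5`, so a bound `b` for negative index `k` gives a bound `b + 5` for negative index `k + 1`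
(`NegBound.step`).

*Small negative index.* For negative index `0, 1, 2, 3` the positive index is at most `0, 1, 3, 5`. A
minimal vertex set violating the bound `b` for negative index `k` has exactly `b + k + 1` vertices and
carries a nondegenerate form, so no nonpositive subspace on it has dimension above `k`
(`NegBound.critical`). This is used to exclude configurations by exhibiting nonpositive vectors. For
`k = 1` all vertices are adjacent, and zero-sum vectors give too large a space. For `k = 2` there is no
triangle and no independent triple on five or more vertices, so there are at most five vertices, and
five vertices form a `5`-cycle. For `k = 3` there are nine vertices, and a vertex `v` of minimum degree
has degree `3` or `4`. Degree `4` is excluded by zero-sum vectors on the four non-neighbours. In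
degree `3` the five non-neighbours form a `5`-cycle, and projecting the differences of the three
neighbours orthogonally to the cycle restricts their attachments to the cycle so much that a `K₅` minor
appears (`NonposBound.rimForm_neg`, `rimPatterns_of_form`).

For negative index `n + 3` the bound is therefore `5 (n + 1)`, and
`(n + 3) (n + 4) - 10 (n + 1) = (n - 1) (n - 2) ≥ 0`.
-/

open Matrix

/-- The adjacency matrix of a simple graph over `ℝ` is Hermitian. -/
theorem SimpleGraph.adjHerm {V : Type*} [Fintype V] [DecidableEq V] (G : SimpleGraph V)
    [DecidableRel G.Adj] : (G.adjMatrix ℝ).IsHermitian := by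
  unfold Matrix.IsHermitian
  rw [conjTranspose_eq_transpose_of_trivial]
  exact G.isSymm_adjMatrix

/-- `n⁺(G)`: the number of positive eigenvalues of the adjacency matrix of `G`,
counted with multiplicity. -/
noncomputable def SimpleGraph.posInertia {V : Type*} [Finite V] (G : SimpleGraph V) : ℕ :=
  letI := Fintype.ofFinite V
  letI := Classical.decEq V
  letI : DecidableRel G.Adj := Classical.decRel _
  Nat.card {v : V // 0 < G.adjHerm.eigenvalues v}

/-- `n⁻(G)`: the number of negative eigenvalues of the adjacency matrix of `G`,
counted with multiplicity. -/
noncomputable def SimpleGraph.negInertia {V : Type*} [Finite V] (G : SimpleGraph V) : ℕ :=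
  letI := Fintype.ofFinite V
  letI := Classical.decEq V
  letI : DecidableRel G.Adj := Classical.decRel _
  Nat.card {v : V // G.adjHerm.eigenvalues v < 0}
/-- A simple graph is planar if it admits a drawing in the plane: an injective placement of
vertices together with a simple arc for each edge joining the images of its endpoints, such
that no arc passes through the image of any vertex other than its endpoints, and arcs of
distinct edges meet only at images of common endpoints. -/
def SimpleGraph.IsPlanar {V : Type*} (G : SimpleGraph V) : Prop :=
  ∃ (f : V → ℝ × ℝ) (γ : ∀ u v : V, G.Adj u v → unitInterval → ℝ × ℝ),
    Function.Injective f ∧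
    (∀ u v (h : G.Adj u v), Continuous (γ u v h)) ∧
    (∀ u v (h : G.Adj u v), Function.Injective (γ u v h)) ∧
    (∀ u v (h : G.Adj u v), γ u v h 0 = f u ∧ γ u v h 1 = f v) ∧
    (∀ u v (h : G.Adj u v) (t : unitInterval) (w : V), γ u v h t = f w → w = u ∨ w = v) ∧
    (∀ u v (h : G.Adj u v) (u' v' : V) (h' : G.Adj u' v') (t t' : unitInterval),
      s(u, v) ≠ s(u', v') → γ u v h t = γ u' v' h' t' →
      ∃ w : V, (w = u ∨ w = v) ∧ (w = u' ∨ w = v') ∧ γ u v h t = f w)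

section Drawing

open unitInterval

/-! ### `K₅` has no drawing in the plane -/

/-- A nowhere vanishing continuous function on the unit square has a continuous logarithm. -/
theorem exists_log_square (f : I × I → ℂ) (hf : Continuous f) (h0 : ∀ z, f z ≠ 0) :
    ∃ F : I × I → ℂ, Continuous F ∧ ∀ z, Complex.exp (F z) = f z := by
  have cov := Complex.isCoveringMap_exp
  let H : C(I × I, {z : ℂ // z ≠ 0}) := ⟨fun z => ⟨f z, h0 z⟩, by fun_prop⟩
  let γ : C(I, {z : ℂ // z ≠ 0}) := H.comp ⟨fun a => (0, a), by fun_prop⟩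
  have hγ : γ 0 = ⟨_, (Complex.log (γ 0).1).exp_ne_zero⟩ := by
    ext; simp [Complex.exp_log (γ 0).2]
  let g := cov.liftPath γ _ hγ
  have hg := cov.liftPath_lifts γ _ hγ
  have H0 : ∀ a, H (0, a) = ⟨_, (g a).exp_ne_zero⟩ := fun a => (congrFun hg a).symm
  refine ⟨cov.liftHomotopy H g H0, (cov.liftHomotopy H g H0).continuous, fun z => ?_⟩
  exact congrArg Subtype.val (congrFun (cov.liftHomotopy_lifts H g H0) z)

/-- A nowhere vanishing continuous function on the unit interval has a continuous logarithm. -/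
theorem exists_log_path (f : I → ℂ) (hf : Continuous f) (h0 : ∀ z, f z ≠ 0) :
    ∃ F : I → ℂ, Continuous F ∧ ∀ z, Complex.exp (F z) = f z := by
  obtain ⟨F, hF, h⟩ := exists_log_square (fun z => f z.1) (by fun_prop) fun z => h0 z.1
  exact ⟨fun s => F (s, 0), by fun_prop, fun s => h (s, 0)⟩

/-- The increment of a continuous logarithm depends only on the function, and is not affected by
a constant factor. -/
theorem log_increment_eq {g₁ g₂ : I → ℂ} (h₁ : Continuous g₁) (h₂ : Continuous g₂) (c : ℂ)
    (h : ∀ s, Complex.exp (g₁ s) = c * Complex.exp (g₂ s)) : g₁ 1 - g₁ 0 = g₂ 1 - g₂ 0 := by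
  have key : g₁ = fun s => g₂ s + (g₁ 0 - g₂ 0) := by
    refine Complex.isCoveringMap_exp.eq_of_comp_eq h₁ (by fun_prop) ?_ 0 (by simp)
    funext s
    apply Subtype.ext
    have h0 := h 0
    have hs := h s
    have e2 := Complex.exp_ne_zero (g₂ 0)
    simp only [Function.comp, Complex.exp_add, Complex.exp_sub, hs, h0]
    field_simp
  have := congrFun key 1
  rw [this]; ring

/-- The sign recording the order of two vertices of `K₅`: the difference, in units of `π i`, of the
chosen logarithms of `P b - P c` and `P c - P b` in `no_K5_drawing`. -/
def ordSign (c b : Fin 5) : ℤ := if c < b then -1 else 1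

/-- The parity count behind the non-planarity of `K₅`. Here `n c a b` stands for the winding defect
of the edge `ab` around the vertex `c`, and each pair of disjoint edges yields one relation. Modulo
`4` the fifteen relations add up to a contradiction. -/
theorem parity_contradiction (n : Fin 5 → Fin 5 → Fin 5 → ℤ)
    (h : ∀ a b c d : Fin 5, a < b → c < d → a ≠ c → a ≠ d → b ≠ c → b ≠ d →
      2 * (n c a b - n d a b - n a c d + n b c d) =
        -(ordSign c b - ordSign c a - ordSign d b + ordSign d a)) : False := by
  have h1 := h 0 1 2 3 (by decide) (by decide) (by decide) (by decide) (by decide) (by decide)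
  have h2 := h 0 2 1 3 (by decide) (by decide) (by decide) (by decide) (by decide) (by decide)
  have h3 := h 0 3 1 2 (by decide) (by decide) (by decide) (by decide) (by decide) (by decide)
  have h4 := h 0 1 2 4 (by decide) (by decide) (by decide) (by decide) (by decide) (by decide)
  have h5 := h 0 2 1 4 (by decide) (by decide) (by decide) (by decide) (by decide) (by decide)
  have h6 := h 0 4 1 2 (by decide) (by decide) (by decide) (by decide) (by decide) (by decide)
  have h7 := h 0 1 3 4 (by decide) (by decide) (by decide) (by decide) (by decide) (by decide)
  have h8 := h 0 3 1 4 (by decide) (by decide) (by decide) (by decide) (by decide) (by decide)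
  have h9 := h 0 4 1 3 (by decide) (by decide) (by decide) (by decide) (by decide) (by decide)
  have h10 := h 0 2 3 4 (by decide) (by decide) (by decide) (by decide) (by decide) (by decide)
  have h11 := h 0 3 2 4 (by decide) (by decide) (by decide) (by decide) (by decide) (by decide)
  have h12 := h 0 4 2 3 (by decide) (by decide) (by decide) (by decide) (by decide) (by decide)
  have h13 := h 1 2 3 4 (by decide) (by decide) (by decide) (by decide) (by decide) (by decide)
  have h14 := h 1 3 2 4 (by decide) (by decide) (by decide) (by decide) (by decide) (by decide)
  have h15 := h 1 4 2 3 (by decide) (by decide) (by decide) (by decide) (by decide) (by decide)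
  simp [ordSign] at h1 h2 h3 h4 h5 h6 h7 h8 h9 h10 h11 h12 h13 h14 h15
  omega

/-- A continuous map of `K₅` to the plane cannot keep the images of disjoint edges disjoint, even
if edges are allowed to cross themselves and their neighbours. -/
theorem no_K5_drawing (P : Fin 5 → ℂ) (γ : Fin 5 → Fin 5 → I → ℂ)
    (hc : ∀ a b, a < b → Continuous (γ a b))
    (h0 : ∀ a b, a < b → γ a b 0 = P a) (h1 : ∀ a b, a < b → γ a b 1 = P b)
    (hv : ∀ a b c, a < b → c ≠ a → c ≠ b → ∀ s, γ a b s ≠ P c)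
    (hd : ∀ a b c d, a < b → c < d → a ≠ c → a ≠ d → b ≠ c → b ≠ d →
      ∀ s t, γ a b s ≠ γ c d t) : False := by
  have hP : ∀ a c, a ≠ c → P a ≠ P c := by
    intro a c hac
    obtain ⟨b, hb⟩ : ∃ b : Fin 5, b ≠ a ∧ b ≠ c := by revert a c; decide
    rcases lt_or_gt_of_ne hb.1 with h | h
    · rw [← h1 _ _ h]; exact hv _ _ _ h hb.2.symm hac.symm 1
    · rw [← h0 _ _ h]; exact hv _ _ _ h hac.symm hb.2.symm 0
  -- `ℓ c a b` is a continuous logarithm of `γ a b - P c`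
  have hl : ∀ c a b : Fin 5, ∃ F : I → ℂ, a < b → c ≠ a → c ≠ b →
      Continuous F ∧ ∀ s, Complex.exp (F s) = γ a b s - P c := by
    intro c a b
    by_cases h : a < b ∧ c ≠ a ∧ c ≠ b
    · obtain ⟨F, hF⟩ := exists_log_path (fun s => γ a b s - P c)
        ((hc a b h.1).sub continuous_const)
        (fun s => sub_ne_zero.2 (hv a b c h.1 h.2.1 h.2.2 s))
      exact ⟨F, fun _ _ _ => hF⟩
    · exact ⟨0, fun x y z => (h ⟨x, y, z⟩).elim⟩
  choose ℓ hℓ using hl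
  -- logarithms of `P a - P c`, chosen so that `lam a c` and `lam c a` differ by `π * I`
  let lam : Fin 5 → Fin 5 → ℂ := fun c a =>
    if c < a then Complex.log (P a - P c) else Complex.log (P c - P a) + Real.pi * Complex.I
  have hlam : ∀ c a, c ≠ a → Complex.exp (lam c a) = P a - P c := by
    intro c a h
    by_cases h' : c < a
    · simp only [lam, h', if_true]
      exact Complex.exp_log (sub_ne_zero.2 (hP _ _ h.symm))
    · simp only [lam, h', if_false, Complex.exp_add, Complex.exp_pi_mul_I]
      rw [Complex.exp_log (sub_ne_zero.2 (hP _ _ h))]; ring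
  have hlam2 : ∀ c a, c ≠ a → lam c a - lam a c = ordSign c a * (Real.pi * Complex.I) := by
    intro c a h
    rcases lt_or_gt_of_ne h with h | h <;>
      simp [lam, ordSign, h, h.not_gt]
  have hn : ∀ c a b : Fin 5, ∃ n : ℤ, a < b → c ≠ a → c ≠ b →
      ℓ c a b 1 - ℓ c a b 0 = lam c b - lam c a + n * (2 * Real.pi * Complex.I) := by
    intro c a b
    by_cases h : a < b ∧ c ≠ a ∧ c ≠ b
    · have hL := (hℓ c a b h.1 h.2.1 h.2.2).2
      have : Complex.exp (ℓ c a b 1 - ℓ c a b 0) = Complex.exp (lam c b - lam c a) := by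
        rw [Complex.exp_sub, Complex.exp_sub, hL, hL, h0 _ _ h.1, h1 _ _ h.1, hlam _ _ h.2.1,
          hlam _ _ h.2.2]
      obtain ⟨n, hn⟩ := Complex.exp_eq_exp_iff_exists_int.1 this
      exact ⟨n, fun _ _ _ => hn⟩
    · exact ⟨0, fun x y z => (h ⟨x, y, z⟩).elim⟩
  choose n hn using hn
  refine parity_contradiction n fun a b c d hab hcd ac ad bc bd => ?_
  obtain ⟨F, hF, hFe⟩ := exists_log_square (fun z => γ a b z.1 - γ c d z.2)
    (((hc a b hab).comp continuous_fst).sub ((hc c d hcd).comp continuous_snd))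
    (fun z => sub_ne_zero.2 (hd a b c d hab hcd ac ad bc bd z.1 z.2))
  -- the difference of the two edges vanishes nowhere on the square, so the increments of its
  -- logarithm along the four sides cancel
  have e1 := log_increment_eq (g₁ := fun s => F (s, 0)) (by fun_prop)
    (hℓ c a b hab ac.symm bc.symm).1 1 (fun s => by
      rw [hFe, (hℓ c a b hab ac.symm bc.symm).2, h0 c d hcd, one_mul])
  have e2 := log_increment_eq (g₁ := fun s => F (s, 1)) (by fun_prop)
    (hℓ d a b hab ad.symm bd.symm).1 1 (fun s => by
      rw [hFe, (hℓ d a b hab ad.symm bd.symm).2, h1 c d hcd, one_mul])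
  have e3 := log_increment_eq (g₁ := fun t => F (0, t)) (by fun_prop)
    (hℓ a c d hcd ac ad).1 (-1) (fun s => by
      rw [hFe, (hℓ a c d hcd ac ad).2, h0 a b hab]; ring)
  have e4 := log_increment_eq (g₁ := fun t => F (1, t)) (by fun_prop)
    (hℓ b c d hcd bc bd).1 (-1) (fun s => by
      rw [hFe, (hℓ b c d hcd bc bd).2, h1 a b hab]; ring)
  rw [hn _ _ _ hab ac.symm bc.symm] at e1
  rw [hn _ _ _ hab ad.symm bd.symm] at e2
  rw [hn _ _ _ hcd ac ad] at e3
  rw [hn _ _ _ hcd bc bd] at e4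
  have s1 := hlam2 c b bc.symm
  have s2 := hlam2 c a ac.symm
  have s3 := hlam2 d b bd.symm
  have s4 := hlam2 d a ad.symm
  have hpi : (Real.pi : ℂ) * Complex.I ≠ 0 := by
    simp [Real.pi_ne_zero]
  have key : ((2 * (n c a b - n d a b - n a c d + n b c d) : ℤ) : ℂ) * (Real.pi * Complex.I) =
      ((-(ordSign c b - ordSign c a - ordSign d b + ordSign d a) : ℤ) : ℂ) *
        (Real.pi * Complex.I) := by
    push_cast
    linear_combination e2 - e1 + e3 - e4 - s1 + s2 + s3 - s4
  exact_mod_cast mul_right_cancel₀ hpi key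

/-! ### `K₅` minors of planar graphs -/

/-- `B` induces a connected (possibly empty) subgraph of `G`. -/
def SimpleGraph.ConnIn {V : Type*} (G : SimpleGraph V) (B : Set V) : Prop :=
  ∀ a ∈ B, ∀ b ∈ B, Relation.ReflTransGen (fun x y => G.Adj x y ∧ x ∈ B ∧ y ∈ B) a b

/-- `G` has a `K₅` minor, given by its five branch sets. -/
def SimpleGraph.HasK5 {V : Type*} (G : SimpleGraph V) : Prop :=
  ∃ B : Fin 5 → Set V, (∀ i, (B i).Nonempty) ∧ (∀ i, G.ConnIn (B i)) ∧
    (∀ i j x, x ∈ B i → x ∈ B j → i = j) ∧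
    ∀ i j, i ≠ j → ∃ a ∈ B i, ∃ b ∈ B j, G.Adj a b

/-- Branch sets of a `K₅` minor are drawn as disjoint path-connected sets, so joining one vertex
of each along paths in the unions of pairs of branch sets gives a map of `K₅` that `no_K5_drawing`
excludes. -/
theorem SimpleGraph.IsPlanar.not_hasK5 {V : Type*} {G : SimpleGraph V} (hG : G.IsPlanar) :
    ¬ G.HasK5 := by
  rintro ⟨B, hne, hconn, hdisj, hadj⟩
  obtain ⟨f, γ, hf, hγc, -, hγe, hγv, hγγ⟩ := hG
  -- the part of the drawing spanned by a vertex set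
  let D : Set V → Set (ℝ × ℝ) := fun X =>
    {p | (∃ u ∈ X, p = f u) ∨ ∃ u ∈ X, ∃ v ∈ X, ∃ h t, p = γ u v h t}
  have hD : ∀ X Y : Set V, (∀ x ∈ X, x ∉ Y) → ∀ p ∈ D X, p ∉ D Y := by
    rintro X Y hXY p (⟨u, hu, rfl⟩ | ⟨u, hu, v, hv, h, t, rfl⟩)
      (⟨u', hu', e⟩ | ⟨u', hu', v', hv', h', t', e⟩)
    · exact hXY u hu (hf e ▸ hu')
    · rcases hγv _ _ _ _ _ e.symm with rfl | rfl
      · exact hXY _ hu hu'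
      · exact hXY _ hu hv'
    · rcases hγv _ _ _ _ _ e with rfl | rfl
      · exact hXY _ hu hu'
      · exact hXY _ hv hu'
    · have hne : s(u, v) ≠ s(u', v') := by
        intro e
        rcases Sym2.eq_iff.1 e with ⟨rfl, rfl⟩ | ⟨rfl, rfl⟩
        · exact hXY _ hu hu'
        · exact hXY _ hu hv'
      obtain ⟨w, hw, hw', -⟩ := hγγ _ _ _ _ _ _ _ _ hne e
      have h1 : w ∈ X := by rcases hw with rfl | rfl <;> assumption
      have h2 : w ∈ Y := by rcases hw' with rfl | rfl <;> assumption
      exact hXY _ h1 h2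
  have hedge : ∀ X : Set V, ∀ u ∈ X, ∀ v ∈ X, G.Adj u v → JoinedIn (D X) (f u) (f v) := by
    intro X u hu v hv h
    refine ⟨⟨⟨γ u v h, hγc u v h⟩, (hγe u v h).1, (hγe u v h).2⟩, fun t => ?_⟩
    exact Or.inr ⟨u, hu, v, hv, h, t, rfl⟩
  have hconnD : ∀ i, ∀ X : Set V, B i ⊆ X → ∀ u ∈ B i, ∀ v ∈ B i,
      JoinedIn (D X) (f u) (f v) := by
    intro i X hX u hu v hv
    induction hconn i u hu v hv with
    | refl => exact JoinedIn.refl (Or.inl ⟨u, hX hu, rfl⟩)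
    | tail _ h ih => exact (ih h.2.1).trans (hedge X _ (hX h.2.1) _ (hX h.2.2) h.1)
  choose r hr using hne
  have hpath : ∀ a b, a ≠ b → JoinedIn (D (B a ∪ B b)) (f (r a)) (f (r b)) := by
    intro a b hab
    obtain ⟨u, hu, v, hv, h⟩ := hadj a b hab
    exact ((hconnD a _ Set.subset_union_left _ (hr a) _ hu).trans
      (hedge _ _ (Or.inl hu) _ (Or.inr hv) h)).trans
      (hconnD b _ Set.subset_union_right _ hv _ (hr b))
  let φ := Complex.equivRealProdCLM.symm
  have hφ : Function.Injective φ := φ.injective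
  have hex : ∀ a b, ∃ p : I → ℝ × ℝ, a < b → Continuous p ∧ p 0 = f (r a) ∧ p 1 = f (r b) ∧
      ∀ t, p t ∈ D (B a ∪ B b) := by
    intro a b
    by_cases hab : a < b
    · have h := hpath a b hab.ne
      exact ⟨h.somePath, fun _ => ⟨h.somePath.continuous, h.somePath.source, h.somePath.target,
        h.somePath_mem⟩⟩
    · exact ⟨fun _ => 0, fun h => (hab h).elim⟩
  choose p hp using hex
  refine no_K5_drawing (fun a => φ (f (r a))) (fun a b t => φ (p a b t)) ?_ ?_ ?_ ?_ ?_
  · intro a b h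
    exact φ.continuous.comp (hp a b h).1
  · intro a b h
    simp only [(hp a b h).2.1]
  · intro a b h
    simp only [(hp a b h).2.2.1]
  · intro a b c h ca cb s e
    refine hD (B a ∪ B b) (B c) ?_ _ ((hp a b h).2.2.2 s) ?_
    · rintro x (hx | hx) hx'
      · exact ca (hdisj _ _ _ hx' hx)
      · exact cb (hdisj _ _ _ hx' hx)
    · rw [hφ e]; exact Or.inl ⟨_, hr c, rfl⟩
  · intro a b c d h h' ac ad bc bd s t e
    refine hD (B a ∪ B b) (B c ∪ B d) ?_ _ ((hp a b h).2.2.2 s) ?_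
    · rintro x (hx | hx) (hx' | hx')
      · exact ac (hdisj _ _ _ hx hx')
      · exact ad (hdisj _ _ _ hx hx')
      · exact bc (hdisj _ _ _ hx hx')
      · exact bd (hdisj _ _ _ hx hx')
    · rw [hφ e]; exact (hp c d h').2.2.2 t

end Drawing

section Combinatorics

open Finset

set_option linter.unusedSectionVars false

/-! ### Constructions of `K₅` minors -/

theorem SimpleGraph.ConnIn.singleton {V : Type*} (G : SimpleGraph V) (a : V) :
    G.ConnIn {a} := by
  rintro x rfl y rfl
  exact .refl

theorem SimpleGraph.ConnIn.insert_vertex {V : Type*} {G : SimpleGraph V} {B : Set V}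
    (hB : G.ConnIn B) {x y : V} (hy : y ∈ B) (h : G.Adj x y) : G.ConnIn (insert x B) := by
  have hm : ∀ a ∈ B, ∀ b ∈ B,
      Relation.ReflTransGen (fun c d => G.Adj c d ∧ c ∈ insert x B ∧ d ∈ insert x B) a b :=
    fun a ha b hb => Relation.ReflTransGen.mono
      (fun c d h => ⟨h.1, Or.inr h.2.1, Or.inr h.2.2⟩) _ _ (hB a ha b hb)
  have h1 : Relation.ReflTransGen (fun c d => G.Adj c d ∧ c ∈ insert x B ∧ d ∈ insert x B) x y :=
    .single ⟨h, Or.inl rfl, Or.inr hy⟩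
  have h2 : Relation.ReflTransGen (fun c d => G.Adj c d ∧ c ∈ insert x B ∧ d ∈ insert x B) y x :=
    .single ⟨h.symm, Or.inr hy, Or.inl rfl⟩
  rintro a (rfl | ha) b (rfl | hb)
  · exact .refl
  · exact h1.trans (hm _ hy _ hb)
  · exact (hm _ ha _ hy).trans h2
  · exact hm _ ha _ hb

theorem SimpleGraph.HasK5.of_lt {V : Type*} {G : SimpleGraph V} (B : Fin 5 → Set V)
    (hne : ∀ i, (B i).Nonempty) (hc : ∀ i, G.ConnIn (B i))
    (hd : ∀ i j, i < j → ∀ x ∈ B i, x ∉ B j)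
    (ha : ∀ i j, i < j → ∃ a ∈ B i, ∃ b ∈ B j, G.Adj a b) : G.HasK5 := by
  refine ⟨B, hne, hc, fun i j x hi hj => ?_, fun i j hij => ?_⟩
  · rcases lt_trichotomy i j with h | h | h
    · exact (hd _ _ h _ hi hj).elim
    · exact h
    · exact (hd _ _ h _ hj hi).elim
  · rcases lt_or_gt_of_ne hij with h | h
    · exact ha _ _ h
    · obtain ⟨a, h1, b, h2, h3⟩ := ha _ _ h
      exact ⟨b, h2, a, h1, h3.symm⟩

theorem SimpleGraph.HasK5.mono {V : Type*} {G H : SimpleGraph V} (h : G ≤ H) (hG : G.HasK5) :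
    H.HasK5 := by
  obtain ⟨B, hne, hc, hd, ha⟩ := hG
  refine ⟨B, hne, fun i a ha b hb => Relation.ReflTransGen.mono
    (fun x y hxy => ⟨h hxy.1, hxy.2⟩) _ _ (hc i a ha b hb), hd,
    fun i j hij => ?_⟩
  obtain ⟨a, h1, b, h2, h3⟩ := ha i j hij
  exact ⟨a, h1, b, h2, h h3⟩

theorem SimpleGraph.HasK5.of_clique {V : Type*} {G : SimpleGraph V} (p : Fin 5 → V)
    (h : ∀ i j, i < j → G.Adj (p i) (p j)) : G.HasK5 := by
  refine .of_lt (fun i => {p i}) (fun i => ⟨_, rfl⟩) (fun i => .singleton _ _) ?_ ?_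
  · rintro i j hij x rfl h'
    exact (h i j hij).ne h'
  · intro i j hij
    exact ⟨_, rfl, _, rfl, h i j hij⟩

/-- A `K₅` minor in the wheel-like graph obtained by joining `v` to `K₅` minus two disjoint edges
`ab` and `cd`: contract `bc`. -/
theorem SimpleGraph.HasK5.of_six {V : Type*} {G : SimpleGraph V} {v a b c d e : V}
    (va : G.Adj v a) (vb : G.Adj v b) (vc : G.Adj v c) (vd : G.Adj v d) (ve : G.Adj v e)
    (hab : a ≠ b) (hcd : c ≠ d)
    (ac : G.Adj a c) (ad : G.Adj a d) (ae : G.Adj a e) (bc : G.Adj b c) (bd : G.Adj b d)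
    (be : G.Adj b e) (de : G.Adj d e) (ce : G.Adj c e) : G.HasK5 := by
  have := va.ne; have := vb.ne; have := vc.ne; have := vd.ne; have := ve.ne
  have := ac.ne; have := ad.ne; have := ae.ne; have := bc.ne; have := bd.ne
  have := be.ne; have := de.ne; have := ce.ne
  refine .of_lt ![{v}, {e}, {a}, {d}, {b, c}] ?_ ?_ ?_ ?_
  · intro i; fin_cases i <;> simp
  · intro i
    fin_cases i
    · exact .singleton _ _
    · exact .singleton _ _
    · exact .singleton _ _
    · exact .singleton _ _
    · exact (ConnIn.singleton G c).insert_vertex rfl bc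
  · intro i j hij
    fin_cases i <;> fin_cases j <;> first | (exfalso; revert hij; decide) | (simp; grind)
  · intro i j hij
    fin_cases i <;> fin_cases j <;> first
      | (exfalso; revert hij; decide)
      | simp [G.adj_comm, *]

/-- Contracting the edge `uv` onto `u`: `H` may have the edges of `G` off `v`, and edges from `u` to
the neighbours of `v`. -/
theorem SimpleGraph.HasK5.of_contract {V : Type*} {G H : SimpleGraph V} {u v : V}
    (huv : G.Adj u v) (hv : ∀ x, ¬ H.Adj v x)
    (hH : ∀ x y, H.Adj x y → G.Adj x y ∨ (x = u ∧ G.Adj v y) ∨ (y = u ∧ G.Adj v x))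
    (h : H.HasK5) : G.HasK5 := by
  obtain ⟨B, hne, hc, hd, ha⟩ := h
  have hvB : ∀ i, v ∉ B i := by
    intro i hi
    obtain ⟨j, hj⟩ := exists_ne i
    obtain ⟨a, h1, b, h2, h3⟩ := ha i j hj.symm
    rcases (hc i v hi a h1).cases_head with rfl | ⟨c, h, -⟩
    · exact hv _ h3
    · exact hv _ h.1
  let B' : Fin 5 → Set V := fun i => {x | x ∈ B i ∨ (x = v ∧ u ∈ B i)}
  refine ⟨B', fun i => (hne i).mono fun x hx => Or.inl hx, ?_, ?_, ?_⟩
  · intro i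
    let R : V → V → Prop := fun x y => G.Adj x y ∧ x ∈ B' i ∧ y ∈ B' i
    have hm : ∀ a ∈ B i, ∀ b ∈ B i, Relation.ReflTransGen R a b := by
      intro a ha b hb
      refine (hc i a ha b hb).trans_induction_on (fun _ => .refl) ?_ fun _ _ => .trans
      rintro x y ⟨hxy, hx, hy⟩
      rcases hH x y hxy with h | ⟨rfl, h⟩ | ⟨rfl, h⟩
      · exact .single ⟨h, Or.inl hx, Or.inl hy⟩
      · exact .head ⟨huv, Or.inl hx, Or.inr ⟨rfl, hx⟩⟩
          (.single ⟨h, Or.inr ⟨rfl, hx⟩, Or.inl hy⟩)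
      · exact .head ⟨h.symm, Or.inl hx, Or.inr ⟨rfl, hy⟩⟩
          (.single ⟨huv.symm, Or.inr ⟨rfl, hy⟩, Or.inl hy⟩)
    rintro a (ha | ⟨rfl, hu⟩) b (hb | ⟨rfl, hu'⟩)
    · exact hm a ha b hb
    · exact (hm a ha u hu').tail ⟨huv, Or.inl hu', Or.inr ⟨rfl, hu'⟩⟩
    · exact .head ⟨huv.symm, Or.inr ⟨rfl, hu⟩, Or.inl hu⟩ (hm u hu b hb)
    · exact .refl
  · rintro i j x (hi | ⟨rfl, hi⟩) (hj | ⟨e, hj⟩)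
    · exact hd _ _ _ hi hj
    · exact (hvB _ (e ▸ hi)).elim
    · exact (hvB _ hj).elim
    · exact hd _ _ _ hi hj
  · intro i j hij
    obtain ⟨a, h1, b, h2, h3⟩ := ha i j hij
    rcases hH a b h3 with h | ⟨rfl, h⟩ | ⟨rfl, h⟩
    · exact ⟨a, Or.inl h1, b, Or.inl h2, h⟩
    · exact ⟨v, Or.inr ⟨rfl, h1⟩, b, Or.inl h2, h⟩
    · exact ⟨a, Or.inl h1, v, Or.inr ⟨rfl, h2⟩, h.symm⟩

/-! ### Mader's edge bound -/

theorem SimpleGraph.card_edgeFinset_eq_ncard {V : Type*} (G : SimpleGraph V) [Fintype G.edgeSet] :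
    #G.edgeFinset = G.edgeSet.ncard := by
  rw [Set.ncard_eq_toFinset_card', edgeFinset]

open Classical in
/-- The local step of Mader's theorem, for a vertex `v` none of whose edges can be contracted
cheaply. If `v` has degree `4`, its neighbours form a clique; if it has degree `5`, each of them misses
at most one other, so the neighbourhood contains `K₅` minus two disjoint edges. -/
theorem SimpleGraph.mader_local {V : Type*} [Fintype V] {G : SimpleGraph V} {v : V}
    (hd : G.degree v = 4 ∨ G.degree v = 5)
    (hc : ∀ u, G.Adj v u → 3 ≤ #(G.neighborFinset v ∩ G.neighborFinset u)) : G.HasK5 := by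
  have hcard : #(G.neighborFinset v) = 4 ∨ #(G.neighborFinset v) = 5 := by simpa using hd
  rcases hcard with h4 | h5
  · have hadj : ∀ a b, G.Adj v a → G.Adj v b → a ≠ b → G.Adj a b := by
      intro a b ha hb hab
      by_contra hn
      have hsub : G.neighborFinset v ∩ G.neighborFinset a ⊆
          ((G.neighborFinset v).erase a).erase b := by
        intro x hx
        simp only [mem_inter, mem_neighborFinset, mem_erase] at hx ⊢
        exact ⟨fun e => hn (e ▸ hx.2), hx.2.ne', hx.1⟩
      have h1 := card_le_card hsub
      rw [card_erase_of_mem (by simp [hab.symm, hb]), card_erase_of_mem (by simp [ha]), h4] at h1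
      have := hc a ha
      omega
    let g := (G.neighborFinset v).equivFinOfCardEq h4
    have hg : ∀ i, G.Adj v (g.symm i) := fun i => (G.mem_neighborFinset v _).1 (g.symm i).2
    refine .of_clique (Fin.cons v fun i => (g.symm i : V)) ?_
    intro i j hij
    induction j using Fin.cases with
    | zero => exact (Fin.not_lt_zero _ hij).elim
    | succ j =>
      induction i using Fin.cases with
      | zero => simpa using hg j
      | succ i =>
        simp only [Fin.cons_succ]
        refine hadj _ _ (hg i) (hg j) fun e => ?_
        have := g.symm.injective (Subtype.ext e)
        simp [this] at hij
  · have hmiss : ∀ a b c, G.Adj v a → G.Adj v b → G.Adj v c → a ≠ b → a ≠ c → b ≠ c →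
        G.Adj a b ∨ G.Adj a c := by
      intro a b c ha hb hc' hab hac hbc
      by_contra! hn
      have hsub : G.neighborFinset v ∩ G.neighborFinset a ⊆
          (((G.neighborFinset v).erase a).erase b).erase c := by
        intro x hx
        simp only [mem_inter, mem_neighborFinset, mem_erase] at hx ⊢
        exact ⟨fun e => hn.2 (e ▸ hx.2), fun e => hn.1 (e ▸ hx.2), hx.2.ne', hx.1⟩
      have h1 := card_le_card hsub
      rw [card_erase_of_mem (by simp [hac.symm, hbc.symm, hc']),
        card_erase_of_mem (by simp [hab.symm, hb]), card_erase_of_mem (by simp [ha]), h5] at h1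
      have := hc a ha
      omega
    let g := (G.neighborFinset v).equivFinOfCardEq h5
    let p : Fin 5 → V := fun i => (g.symm i : V)
    have hp : ∀ i, G.Adj v (p i) := fun i => (G.mem_neighborFinset v _).1 (g.symm i).2
    have hpi : ∀ i j, i ≠ j → p i ≠ p j := fun i j hij e =>
      hij (g.symm.injective (Subtype.ext e))
    by_cases hall : ∀ i j, i ≠ j → G.Adj (p i) (p j)
    · exact .of_clique p fun i j h => hall i j h.ne
    push Not at hall
    obtain ⟨i, j, hij, hn⟩ := hall
    obtain ⟨k, l, m, h⟩ : ∃ k l m : Fin 5, k ≠ i ∧ k ≠ j ∧ l ≠ i ∧ l ≠ j ∧ m ≠ i ∧ m ≠ j ∧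
        k ≠ l ∧ k ≠ m ∧ l ≠ m := by
      clear * - hij; revert i j; decide
    obtain ⟨ki, kj, li, lj, mi, mj, kl, km, lm⟩ := h
    have hi : ∀ x, x ≠ i → x ≠ j → G.Adj (p i) (p x) := fun x xi xj =>
      (hmiss _ _ _ (hp i) (hp j) (hp x) (hpi _ _ hij) (hpi _ _ xi.symm)
        (hpi _ _ xj.symm)).resolve_left hn
    have hj : ∀ x, x ≠ i → x ≠ j → G.Adj (p j) (p x) := fun x xi xj =>
      (hmiss _ _ _ (hp j) (hp i) (hp x) (hpi _ _ hij.symm) (hpi _ _ xj.symm)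
        (hpi _ _ xi.symm)).resolve_left fun h => hn h.symm
    have key : ∀ c d e, c ≠ i → c ≠ j → d ≠ i → d ≠ j → e ≠ i → e ≠ j → c ≠ d →
        G.Adj (p d) (p e) → G.Adj (p c) (p e) → G.HasK5 := fun c d e ci cj di dj ei ej cd h1 h2 =>
      .of_six (hp i) (hp j) (hp c) (hp d) (hp e) (hpi _ _ hij) (hpi _ _ cd) (hi c ci cj)
        (hi d di dj) (hi e ei ej) (hj c ci cj) (hj d di dj) (hj e ei ej) h1 h2
    have m1 := hmiss _ _ _ (hp k) (hp l) (hp m) (hpi _ _ kl) (hpi _ _ km) (hpi _ _ lm)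
    have m2 := hmiss _ _ _ (hp l) (hp k) (hp m) (hpi _ _ kl.symm) (hpi _ _ lm) (hpi _ _ km)
    have m3 := hmiss _ _ _ (hp m) (hp k) (hp l) (hpi _ _ km.symm) (hpi _ _ lm.symm) (hpi _ _ kl)
    by_cases h1 : G.Adj (p k) (p l)
    · by_cases h2 : G.Adj (p k) (p m)
      · exact key l m k li lj mi mj ki kj lm h2.symm h1.symm
      · exact key k m l ki kj mi mj li lj km (m3.resolve_left fun h => h2 h.symm) h1
    · exact key k l m ki kj li lj mi mj kl (m2.resolve_left fun h => h1 h.symm)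
        (m1.resolve_left h1)

open Classical in
/-- Mader's theorem: a graph on `n ≥ 3` vertices with more than `3n - 6` edges has a `K₅` minor.
The set `S` of `n` vertices contains all non-isolated ones, so that the vertex type stays fixed during
the induction. -/
theorem SimpleGraph.mader {V : Type*} [Fintype V] (n : ℕ) (hn : 3 ≤ n) : ∀ (G : SimpleGraph V)
    (S : Finset V), (∀ a b, G.Adj a b → a ∈ S) → #S = n → 3 * n ≤ G.edgeSet.ncard + 5 →
    G.HasK5 := by
  induction n, hn using Nat.le_induction with
  | base =>
    intro G S hS hc he
    have hdeg : ∀ v, G.degree v ≤ if v ∈ S then 2 else 0 := by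
      intro v
      have hsub : G.neighborFinset v ⊆ S.erase v := by
        intro x hx
        simp only [mem_neighborFinset, mem_erase] at hx ⊢
        exact ⟨hx.ne', hS _ _ hx.symm⟩
      have h1 := card_le_card hsub
      rw [card_neighborFinset_eq_degree] at h1
      split_ifs with hv
      · rw [card_erase_of_mem hv, hc] at h1
        exact h1
      · rw [Nat.le_zero, ← card_neighborFinset_eq_degree, card_eq_zero, eq_empty_iff_forall_notMem]
        intro x hx
        exact hv (hS v x (by simpa using hx))
    have h1 := sum_le_sum fun v (_ : v ∈ univ) => hdeg v
    rw [G.sum_degrees_eq_twice_card_edges, card_edgeFinset_eq_ncard, sum_ite_mem, univ_inter,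
      sum_const, hc] at h1
    simp at h1
    omega
  | succ n hn ih =>
    -- it suffices to treat graphs with exactly `3 (n + 1) - 5` edges
    suffices H : ∀ (G : SimpleGraph V) (S : Finset V), (∀ a b, G.Adj a b → a ∈ S) → #S = n + 1 →
        3 * (n + 1) = G.edgeSet.ncard + 5 → G.HasK5 by
      intro G S hS hc he
      obtain ⟨T, hT, hTc⟩ := exists_subset_card_eq (s := G.edgeFinset) (n := 3 * (n + 1) - 5)
        (by rw [card_edgeFinset_eq_ncard]; omega)
      have hle : fromEdgeSet (T : Set (Sym2 V)) ≤ G := by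
        intro a b hab
        rw [fromEdgeSet_adj] at hab
        simpa using hT hab.1
      refine (H (fromEdgeSet (T : Set (Sym2 V))) S (fun a b h => hS a b (hle h)) hc ?_).mono hle
      have : (fromEdgeSet (T : Set (Sym2 V))).edgeFinset = T := by
        rw [← coe_inj, coe_edgeFinset, edgeSet_fromEdgeSet, sdiff_eq_left]
        rw [Set.disjoint_left]
        intro e he hd
        have := hT he
        rw [mem_edgeFinset] at this
        exact G.not_isDiag_of_mem_edgeSet this hd
      rw [← card_edgeFinset_eq_ncard, this, hTc]
      omega
    intro G S hS hc he
    obtain ⟨v, hv, hdv⟩ : ∃ v ∈ S, G.degree v ≤ 5 := by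
      by_contra! hcon
      have h1 : ∑ v ∈ S, 6 ≤ ∑ v ∈ S, G.degree v := sum_le_sum fun v hv => hcon v hv
      have h2 : ∑ v ∈ S, G.degree v ≤ ∑ v, G.degree v :=
        sum_le_sum_of_subset (subset_univ _)
      rw [G.sum_degrees_eq_twice_card_edges, card_edgeFinset_eq_ncard] at h2
      rw [sum_const, hc, smul_eq_mul] at h1
      omega
    have hdel : ∀ a b, (G.deleteIncidenceSet v).Adj a b ↔ G.Adj a b ∧ a ≠ v ∧ b ≠ v := by
      intro a b
      rw [deleteIncidenceSet_adj]
    have hcd := G.card_edgeFinset_deleteIncidenceSet v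
    simp only [card_edgeFinset_eq_ncard] at hcd
    by_cases h3 : G.degree v ≤ 3
    · refine (ih (G.deleteIncidenceSet v) (S.erase v) ?_ ?_ ?_).mono
        (G.deleteIncidenceSet_le v)
      · intro a b h
        rw [hdel] at h
        exact mem_erase.2 ⟨h.2.1, hS _ _ h.1⟩
      · rw [card_erase_of_mem hv, hc]; rfl
      · omega
    -- contracting an edge `uv` loses one edge, and one more for each common neighbour of `u` and `v`
    by_cases hex : ∃ u, G.Adj v u ∧ #(G.neighborFinset v ∩ G.neighborFinset u) ≤ 2
    · obtain ⟨u, huv, hcom⟩ := hex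
      -- `H` is the contraction of `uv` onto `u`, which gains the edges from `u` to `Y`
      set Y := (G.neighborFinset v \ G.neighborFinset u).erase u with hY
      set E := Y.image fun y => s(u, y) with hE
      set H := G.deleteIncidenceSet v ⊔ fromEdgeSet (E : Set (Sym2 V)) with hH
      have hYmem : ∀ y, y ∈ Y ↔ y ≠ u ∧ G.Adj v y ∧ ¬ G.Adj u y := by
        intro y; simp [hY]
      have hadj : ∀ a b, H.Adj a b ↔ (G.Adj a b ∧ a ≠ v ∧ b ≠ v) ∨
          (a = u ∧ b ∈ Y) ∨ (b = u ∧ a ∈ Y) := by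
        intro a b
        rw [hH, sup_adj, hdel, fromEdgeSet_adj, hE]
        simp only [coe_image, Set.mem_image, mem_coe, Sym2.eq_iff]
        constructor
        · rintro (h | ⟨⟨y, hy, ⟨rfl, rfl⟩ | ⟨rfl, rfl⟩⟩, -⟩)
          · exact Or.inl h
          · exact Or.inr (Or.inl ⟨rfl, hy⟩)
          · exact Or.inr (Or.inr ⟨rfl, hy⟩)
        · rintro (h | ⟨rfl, h⟩ | ⟨rfl, h⟩)
          · exact Or.inl h
          · exact Or.inr ⟨⟨b, h, Or.inl ⟨rfl, rfl⟩⟩, ((hYmem b).1 h).1.symm⟩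
          · exact Or.inr ⟨⟨a, h, Or.inr ⟨rfl, rfl⟩⟩, ((hYmem a).1 h).1⟩
      have hvY : v ∉ Y := fun h => G.loopless.irrefl _ ((hYmem v).1 h).2.1
      have hK : H.HasK5 := by
        refine ih H (S.erase v) ?_ ?_ ?_
        · intro a b h
          rcases (hadj a b).1 h with h | ⟨rfl, -⟩ | ⟨-, h⟩
          · exact mem_erase.2 ⟨h.2.1, hS _ _ h.1⟩
          · exact mem_erase.2 ⟨huv.ne', hS _ _ huv.symm⟩
          · exact mem_erase.2 ⟨fun e => hvY (e ▸ h), hS _ _ ((hYmem a).1 h).2.1.symm⟩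
        · rw [card_erase_of_mem hv, hc]; rfl
        · have hsub : (G.deleteIncidenceSet v).edgeFinset ∪ E ⊆ H.edgeFinset := by
            intro e
            induction e with | _ a b
            simp only [mem_union, mem_edgeFinset, mem_edgeSet]
            rintro (h | h)
            · exact Or.inl h
            · rw [hE, mem_image] at h
              obtain ⟨y, hy, h⟩ := h
              rw [hadj]
              rcases Sym2.eq_iff.1 h with ⟨rfl, rfl⟩ | ⟨rfl, rfl⟩
              · exact Or.inr (Or.inl ⟨rfl, hy⟩)
              · exact Or.inr (Or.inr ⟨rfl, hy⟩)
          have hdj : Disjoint (G.deleteIncidenceSet v).edgeFinset E := by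
            rw [Finset.disjoint_left]
            intro e he hE'
            rw [hE, mem_image] at hE'
            obtain ⟨y, hy, rfl⟩ := hE'
            rw [mem_edgeFinset, mem_edgeSet, hdel] at he
            exact ((hYmem y).1 hy).2.2 he.1
          have h1 := card_le_card hsub
          rw [card_union_of_disjoint hdj] at h1
          simp only [card_edgeFinset_eq_ncard] at h1
          have h2 : #E = #Y := by
            rw [hE, card_image_of_injective]
            intro a b h
            exact Sym2.congr_right.1 h
          have h3 : #Y + 1 + #(G.neighborFinset v ∩ G.neighborFinset u) = G.degree v := by
            rw [hY, card_erase_add_one (by simp [huv]), card_sdiff_add_card_inter,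
              card_neighborFinset_eq_degree]
          have h4 := G.degree_le_card_edgeFinset v
          rw [card_edgeFinset_eq_ncard] at h4
          omega
      refine .of_contract huv.symm (fun x h => ?_) (fun x y h => ?_) hK
      · rcases (hadj v x).1 h with h | ⟨h, -⟩ | ⟨-, h⟩
        · exact h.2.1 rfl
        · exact huv.ne h
        · exact hvY h
      · rcases (hadj x y).1 h with h | ⟨rfl, h⟩ | ⟨rfl, h⟩
        · exact Or.inl h.1
        · exact Or.inr (Or.inl ⟨rfl, ((hYmem y).1 h).2.1⟩)
        · exact Or.inr (Or.inr ⟨rfl, ((hYmem x).1 h).2.1⟩)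
    · push Not at hex
      exact mader_local (by omega) hex

open Classical in
/-- Mader's bound for the subgraph induced on `S`, as a bound for the sum of its degrees. -/
theorem SimpleGraph.sum_degree_le {V : Type*} [Fintype V] {G : SimpleGraph V} (hG : ¬ G.HasK5)
    (S : Finset V) (hS : 3 ≤ #S) : ∑ v ∈ S, #{u ∈ S | G.Adj v u} + 12 ≤ 6 * #S := by
  let H : SimpleGraph V :=
    { Adj := fun a b => a ∈ S ∧ b ∈ S ∧ G.Adj a b
      symm := ⟨fun a b h => ⟨h.2.1, h.1, h.2.2.symm⟩⟩
      loopless := ⟨fun a h => G.loopless.irrefl _ h.2.2⟩ }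
  by_contra! hcon
  refine hG (.mono (G := H) (fun a b h => h.2.2) (mader #S hS H S (fun a b h => h.1) rfl ?_))
  have h1 : ∑ v ∈ S, #{u ∈ S | G.Adj v u} ≤ ∑ v, H.degree v := by
    refine le_trans (sum_le_sum fun v hv => ?_) (sum_le_sum_of_subset (subset_univ S))
    rw [← card_neighborFinset_eq_degree]
    refine card_le_card fun u hu => ?_
    rw [mem_filter] at hu
    rw [mem_neighborFinset]
    exact ⟨hv, hu.1, hu.2⟩
  rw [H.sum_degrees_eq_twice_card_edges, card_edgeFinset_eq_ncard] at h1
  omega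

/-! ### The adjacency form and its definite subspaces -/

theorem finrank_le_inf_ker {E F : Type*} [AddCommGroup E] [Module ℝ E] [FiniteDimensional ℝ E]
    [AddCommGroup F] [Module ℝ F] [FiniteDimensional ℝ F] (P : Submodule ℝ E) (f : E →ₗ[ℝ] F) :
    Module.finrank ℝ P ≤ Module.finrank ℝ (P ⊓ LinearMap.ker f : Submodule ℝ E) +
      Module.finrank ℝ F := by
  have h1 := (f.domRestrict P).finrank_range_add_finrank_ker
  have h2 := Submodule.finrank_le (LinearMap.range (f.domRestrict P))
  have h3 : Module.finrank ℝ (LinearMap.ker (f.domRestrict P)) =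
      Module.finrank ℝ (P ⊓ LinearMap.ker f : Submodule ℝ E) := by
    rw [LinearMap.ker_domRestrict]
    rw [← Submodule.map_comap_subtype]
    exact (Submodule.equivMapOfInjective _ P.injective_subtype _).finrank_eq
  omega

theorem finrank_sup_span {E : Type*} [AddCommGroup E] [Module ℝ E] [FiniteDimensional ℝ E]
    (L : Submodule ℝ E) {z : E} (hz : z ∉ L) :
    Module.finrank ℝ (L ⊔ Submodule.span ℝ {z} : Submodule ℝ E) = Module.finrank ℝ L + 1 := by
  have hz0 : z ≠ 0 := fun h => hz (h ▸ L.zero_mem)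
  have h := Submodule.finrank_sup_add_finrank_inf_eq L (Submodule.span ℝ {z})
  have hd : L ⊓ Submodule.span ℝ {z} = ⊥ := by
    rw [← disjoint_iff, Submodule.disjoint_span_singleton' hz0]
    exact hz
  rw [hd, finrank_bot, finrank_span_singleton hz0] at h
  omega


namespace SimpleGraph

variable {V : Type*} [Fintype V]

open Classical in
/-- The bilinear form of the adjacency matrix. -/
noncomputable def bf (G : SimpleGraph V) : LinearMap.BilinForm ℝ (V → ℝ) :=
  Matrix.toBilin' (G.adjMatrix ℝ)

/-- The vectors supported on `S`. -/
def suppOn (S : Finset V) : Submodule ℝ (V → ℝ) where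
  carrier := {x | ∀ v ∉ S, x v = 0}
  add_mem' := fun {x y} hx hy v hv => by simp [hx v hv, hy v hv]
  zero_mem' := fun _ _ => rfl
  smul_mem' := fun c x hx v hv => by simp [hx v hv]

open Classical in
/-- The standard basis vector at `v`. -/
noncomputable def ev (v : V) : V → ℝ := Pi.single v 1

@[simp] theorem ev_self (v : V) : ev v v = 1 := by simp [ev]

theorem ev_of_ne {v w : V} (h : w ≠ v) : ev v w = 0 := by simp [ev, h]

open Classical in
theorem ev_apply (v w : V) : ev v w = if w = v then 1 else 0 := by
  simp [ev, Pi.single_apply]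

theorem ev_mem {S : Finset V} {v : V} (h : v ∈ S) : ev v ∈ suppOn S := by
  intro w hw
  exact ev_of_ne fun e => hw (e ▸ h)

open Classical in
theorem bf_ev (G : SimpleGraph V) (a b : V) : G.bf (ev a) (ev b) = if G.Adj a b then 1 else 0 := by
  simp [bf, ev]

theorem bf_ev_self (G : SimpleGraph V) (a : V) : G.bf (ev a) (ev a) = 0 := by
  simp [bf_ev]

theorem bf_ev_adj {G : SimpleGraph V} {a b : V} (h : G.Adj a b) : G.bf (ev a) (ev b) = 1 := by
  simp [bf_ev, h]

theorem bf_ev_not {G : SimpleGraph V} {a b : V} (h : ¬ G.Adj a b) : G.bf (ev a) (ev b) = 0 := by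
  simp [bf_ev, h]

open Classical in
theorem bf_apply (G : SimpleGraph V) (x y : V → ℝ) :
    G.bf x y = ∑ a, ∑ b, if G.Adj a b then x a * y b else 0 := by
  simp [bf, Matrix.toBilin'_apply]

theorem bf_comm (G : SimpleGraph V) (x y : V → ℝ) : G.bf x y = G.bf y x := by
  rw [bf_apply, bf_apply, Finset.sum_comm]
  refine sum_congr rfl fun a _ => sum_congr rfl fun b _ => ?_
  by_cases h : G.Adj a b
  · simp [h, h.symm, mul_comm]
  · simp [h, G.adj_comm b a]

theorem bf_ev_left (G : SimpleGraph V) {v : V} {y : V → ℝ} (h : ∀ u, G.Adj v u → y u = 0) :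
    G.bf (ev v) y = 0 := by
  rw [bf_apply]
  refine sum_eq_zero fun a _ => sum_eq_zero fun b _ => ?_
  split_ifs with hab
  · by_cases e : a = v
    · subst e; simp [h b hab]
    · simp [ev_of_ne e]
  · rfl

/-- Every subspace supported on `S` on which the form is positive definite has dimension at
most `k`. -/
def PosBound (G : SimpleGraph V) (S : Finset V) (k : ℕ) : Prop :=
  ∀ L : Submodule ℝ (V → ℝ), L ≤ suppOn S → (∀ x ∈ L, x ≠ 0 → 0 < G.bf x x) →
    Module.finrank ℝ L ≤ k

/-- Every subspace supported on `S` on which the form is negative definite has dimension at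
most `k`. -/
def NegBound (G : SimpleGraph V) (S : Finset V) (k : ℕ) : Prop :=
  ∀ L : Submodule ℝ (V → ℝ), L ≤ suppOn S → (∀ x ∈ L, x ≠ 0 → G.bf x x < 0) →
    Module.finrank ℝ L ≤ k

/-- Every subspace supported on `S` on which the form is nonpositive has dimension at most `k`. -/
def NonposBound (G : SimpleGraph V) (S : Finset V) (k : ℕ) : Prop :=
  ∀ L : Submodule ℝ (V → ℝ), L ≤ suppOn S → (∀ x ∈ L, G.bf x x ≤ 0) →
    Module.finrank ℝ L ≤ k

theorem suppOn_mono {S T : Finset V} (h : S ⊆ T) : suppOn S ≤ suppOn T :=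
  fun _ hx v hv => hx v fun hv' => hv (h hv')

theorem NegBound.mono {G : SimpleGraph V} {S T : Finset V} {k : ℕ} (h : S ⊆ T)
    (hT : G.NegBound T k) : G.NegBound S k :=
  fun L hL => hT L (hL.trans (suppOn_mono h))

theorem PosBound.mono_right {G : SimpleGraph V} {S : Finset V} {k l : ℕ} (h : k ≤ l)
    (hS : G.PosBound S k) : G.PosBound S l :=
  fun L hL hp => (hS L hL hp).trans h

theorem finrank_suppOn (S : Finset V) : Module.finrank ℝ (suppOn S) = #S := by
  classical
  let e : suppOn S ≃ₗ[ℝ] (S → ℝ) :=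
    { toFun := fun x v => x.1 v
      map_add' := fun _ _ => rfl
      map_smul' := fun _ _ => rfl
      invFun := fun y => ⟨fun v => if h : v ∈ S then y ⟨v, h⟩ else 0, fun v hv => by simp [hv]⟩
      left_inv := fun x => by
        ext v
        by_cases h : v ∈ S
        · simp [h]
        · simp [h, x.2 v h]
      right_inv := fun y => by
        ext v
        simp }
  rw [e.finrank_eq]
  simp

theorem finrank_add_le {S : Finset V} {P Q : Submodule ℝ (V → ℝ)} (hP : P ≤ suppOn S)
    (hQ : Q ≤ suppOn S) (h : ∀ x ∈ P, x ∈ Q → x = 0) :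
    Module.finrank ℝ P + Module.finrank ℝ Q ≤ #S := by
  have h1 := Submodule.finrank_sup_add_finrank_inf_eq P Q
  have h2 : P ⊓ Q = ⊥ := by
    rw [eq_bot_iff]
    rintro x ⟨hx, hy⟩
    exact h x hx hy
  have h3 := Submodule.finrank_mono (sup_le hP hQ)
  rw [finrank_suppOn] at h3
  rw [h2, finrank_bot] at h1
  omega

theorem bf_add_smul (G : SimpleGraph V) {y z : V → ℝ} (c : ℝ) (h : G.bf y z = 0) :
    G.bf (y + c • z) (y + c • z) = G.bf y y + c ^ 2 * G.bf z z := by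
  have h' : G.bf z y = 0 := by rw [bf_comm, h]
  simp [h, h']
  ring

theorem mem_sup_span {L : Submodule ℝ (V → ℝ)} {z x : V → ℝ}
    (hx : x ∈ L ⊔ Submodule.span ℝ {z}) : ∃ y ∈ L, ∃ c : ℝ, x = y + c • z := by
  obtain ⟨y, hy, w, hw, rfl⟩ := Submodule.mem_sup.1 hx
  obtain ⟨c, rfl⟩ := Submodule.mem_span_singleton.1 hw
  exact ⟨y, hy, c, rfl⟩

theorem sup_span_le {S : Finset V} {L : Submodule ℝ (V → ℝ)} (hL : L ≤ suppOn S) {z : V → ℝ}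
    (hz : z ∈ suppOn S) : L ⊔ Submodule.span ℝ {z} ≤ suppOn S :=
  sup_le hL ((Submodule.span_singleton_le_iff_mem _ _).2 hz)

theorem NonposBound.extend {G : SimpleGraph V} {S : Finset V} {k : ℕ} (h : G.NonposBound S k)
    {L : Submodule ℝ (V → ℝ)} (hL : L ≤ suppOn S) (hn : ∀ x ∈ L, G.bf x x ≤ 0) {z : V → ℝ}
    (hz : z ∈ suppOn S) (hzL : z ∉ L) (hq : G.bf z z ≤ 0) (ho : ∀ x ∈ L, G.bf x z = 0) :
    Module.finrank ℝ L + 1 ≤ k := by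
  rw [← finrank_sup_span L hzL]
  refine h _ (sup_span_le hL hz) fun x hx => ?_
  obtain ⟨y, hy, c, rfl⟩ := mem_sup_span hx
  rw [bf_add_smul G c (ho y hy)]
  have := hn y hy
  nlinarith [sq_nonneg c]

theorem NegBound.extend {G : SimpleGraph V} {S : Finset V} {k : ℕ} (h : G.NegBound S k)
    {L : Submodule ℝ (V → ℝ)} (hL : L ≤ suppOn S) (hn : ∀ x ∈ L, x ≠ 0 → G.bf x x < 0)
    {z : V → ℝ} (hz : z ∈ suppOn S) (hq : G.bf z z < 0) (ho : ∀ x ∈ L, G.bf x z = 0) :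
    Module.finrank ℝ L + 1 ≤ k := by
  have hzL : z ∉ L := fun hzL => by have := ho z hzL; linarith
  rw [← finrank_sup_span L hzL]
  refine h _ (sup_span_le hL hz) fun x hx hx0 => ?_
  obtain ⟨y, hy, c, rfl⟩ := mem_sup_span hx
  rw [bf_add_smul G c (ho y hy)]
  by_cases hy0 : y = 0
  · subst hy0
    have hc : c ≠ 0 := fun hc => hx0 (by simp [hc])
    have : 0 < c ^ 2 := by positivity
    simp only [map_zero]
    nlinarith
  · have := hn y hy hy0
    nlinarith [sq_nonneg c]

theorem PosBound.extend {G : SimpleGraph V} {S : Finset V} {k : ℕ} (h : G.PosBound S k)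
    {L : Submodule ℝ (V → ℝ)} (hL : L ≤ suppOn S) (hn : ∀ x ∈ L, x ≠ 0 → 0 < G.bf x x)
    {z : V → ℝ} (hz : z ∈ suppOn S) (hq : 0 < G.bf z z) (ho : ∀ x ∈ L, G.bf x z = 0) :
    Module.finrank ℝ L + 1 ≤ k := by
  have hzL : z ∉ L := fun hzL => by have := ho z hzL; linarith
  rw [← finrank_sup_span L hzL]
  refine h _ (sup_span_le hL hz) fun x hx hx0 => ?_
  obtain ⟨y, hy, c, rfl⟩ := mem_sup_span hx
  rw [bf_add_smul G c (ho y hy)]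
  by_cases hy0 : y = 0
  · subst hy0
    have hc : c ≠ 0 := fun hc => hx0 (by simp [hc])
    have : 0 < c ^ 2 := by positivity
    simp only [map_zero]
    nlinarith
  · have := hn y hy hy0
    nlinarith [sq_nonneg c]

open Classical in
/-- Passing to the non-neighbours of a vertex lowers the nonpositive index: a space supported
there is orthogonal to the null vector `ev v`. -/
theorem NonposBound.nonneighbors {G : SimpleGraph V} {S : Finset V} {k : ℕ}
    (h : G.NonposBound S (k + 1)) {v : V} (hv : v ∈ S) :
    G.NonposBound {w ∈ S | w ≠ v ∧ ¬ G.Adj v w} k := by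
  intro L hL hn
  have hS : L ≤ suppOn S := hL.trans (suppOn_mono (filter_subset _ _))
  have := h.extend hS hn (ev_mem hv) (fun hvL => ?_) (G.bf_ev_self v).le fun x hx => ?_
  · omega
  · have := hL hvL v (by simp)
    simp at this
  · rw [bf_comm]
    refine G.bf_ev_left fun u hu => hL hx u ?_
    simp [hu]

open Classical in
/-- Passing to the non-neighbours of a non-isolated vertex lowers the negative index: the
span of `ev v` and `ev u` is a hyperbolic plane. -/
theorem NegBound.nonneighbors {G : SimpleGraph V} {S : Finset V} {k : ℕ}
    (h : G.NegBound S (k + 1)) {v u : V} (hv : v ∈ S) (hu : u ∈ S) (huv : G.Adj v u) :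
    G.NegBound {w ∈ S | w ≠ v ∧ ¬ G.Adj v w} k := by
  intro L hL hn
  have hS : L ≤ suppOn S := hL.trans (suppOn_mono (filter_subset _ _))
  have hvx : ∀ x ∈ L, G.bf (ev v) x = 0 := fun x hx =>
    G.bf_ev_left fun u hu => hL hx u (by simp [hu])
  have hxv : ∀ x ∈ L, G.bf x (ev v) = 0 := fun x hx => by rw [bf_comm, hvx x hx]
  -- shear `L` along the null vector `ev v`, making it orthogonal to `ev u` as well
  let φ : (V → ℝ) →ₗ[ℝ] (V → ℝ) :=
    LinearMap.id - (G.bf (ev u)).smulRight (ev v)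
  have hφ : ∀ x, φ x = x - G.bf (ev u) x • ev v := fun x => rfl
  have hq : ∀ x ∈ L, G.bf (φ x) (φ x) = G.bf x x := by
    intro x hx
    simp [hφ, hvx x hx, hxv x hx, bf_ev_self]
  have hinj : Set.InjOn φ L := by
    intro x hx y hy hxy
    by_contra hne
    have h1 := hn (x - y) (L.sub_mem hx hy) (sub_ne_zero.2 hne)
    rw [← hq _ (L.sub_mem hx hy), map_sub, hxy] at h1
    simp at h1
  have hfr : Module.finrank ℝ (L.map φ) = Module.finrank ℝ L := by
    have : Function.Injective (φ.domRestrict L) := fun x y hxy => Subtype.ext (hinj x.2 y.2 hxy)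
    rw [← LinearMap.range_domRestrict, LinearMap.finrank_range_of_inj this]
  have := h.extend (L := L.map φ) (z := ev u - ev v) ?_ ?_ ?_ ?_ ?_
  · omega
  · rintro _ ⟨x, hx, rfl⟩
    exact (suppOn S).sub_mem (hS hx) ((suppOn S).smul_mem _ (ev_mem hv))
  · rintro _ ⟨x, hx, rfl⟩ h0
    rw [hq x hx]
    exact hn x hx fun e => h0 (by rw [e, map_zero])
  · exact (suppOn S).sub_mem (ev_mem hu) (ev_mem hv)
  · simp [bf_ev_self, bf_ev_adj huv, bf_ev_adj huv.symm]
  · rintro _ ⟨x, hx, rfl⟩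
    simp [hφ, hvx x hx, bf_ev_self, bf_ev_adj huv, G.bf_comm x]

open Classical in
/-- Passing to the non-neighbours of `v` lowers the positive index by at most the degree
of `v`. -/
theorem PosBound.of_nonneighbors {G : SimpleGraph V} {S : Finset V} {k : ℕ} {v : V}
    (h : G.PosBound {w ∈ S | w ≠ v ∧ ¬ G.Adj v w} k) :
    G.PosBound S (k + #{w ∈ S | G.Adj v w}) := by
  intro L hL hp
  let f : (V → ℝ) →ₗ[ℝ] (({w ∈ S | G.Adj v w} : Finset V) → ℝ) :=
    LinearMap.funLeft ℝ ℝ Subtype.val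
  have h1 := finrank_le_inf_ker L f
  set L' := L ⊓ LinearMap.ker f with hL'
  have hmem : ∀ x ∈ L', x ∈ L ∧ ∀ u, G.Adj v u → x u = 0 := by
    rintro x ⟨hx, hx'⟩
    refine ⟨hx, fun u hu => ?_⟩
    by_cases hS : u ∈ S
    · exact congrFun hx' ⟨u, by simp [hS, hu]⟩
    · exact hL hx u hS
  -- drop the coordinate at `v`
  let φ : (V → ℝ) →ₗ[ℝ] (V → ℝ) := LinearMap.id - (LinearMap.proj v).smulRight (ev v)
  have hφ : ∀ x, φ x = x - x v • ev v := fun x => rfl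
  have hq : ∀ x ∈ L', G.bf (φ x) (φ x) = G.bf x x := by
    intro x hx
    have h1 : G.bf (ev v) x = 0 := G.bf_ev_left (hmem x hx).2
    have h2 : G.bf x (ev v) = 0 := by rw [bf_comm, h1]
    simp [hφ, h1, h2, bf_ev_self]
  have hinj : Function.Injective (φ.domRestrict L') := by
    rintro ⟨x, hx⟩ ⟨y, hy⟩ hxy
    by_contra hne
    have h1 := hp (x - y) (L.sub_mem (hmem x hx).1 (hmem y hy).1)
      (sub_ne_zero.2 fun e => hne (Subtype.ext e))
    have h2 : φ x = φ y := hxy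
    rw [← hq _ (L'.sub_mem hx hy), map_sub, h2] at h1
    simp at h1
  have h2 := h (L'.map φ) ?_ ?_
  · rw [← LinearMap.range_domRestrict, LinearMap.finrank_range_of_inj hinj] at h2
    simp only [Module.finrank_fintype_fun_eq_card, Fintype.card_coe] at h1
    omega
  · rintro _ ⟨x, hx, rfl⟩ w hw
    simp only [mem_filter, not_and, not_not] at hw
    rw [hφ]
    by_cases hwv : w = v
    · subst hwv; simp
    · simp only [Pi.sub_apply, Pi.smul_apply, ev_of_ne hwv, smul_zero, sub_zero]
      by_cases hS : w ∈ S
      · exact (hmem x hx).2 w (hw hS hwv)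
      · exact hL (hmem x hx).1 w hS
  · rintro _ ⟨x, hx, rfl⟩ h0
    rw [hq x hx]
    exact hp x (hmem x hx).1 fun e => h0 (by rw [e, map_zero])

open Classical in
theorem PosBound.of_erase {G : SimpleGraph V} {S : Finset V} {k : ℕ} {v : V}
    (h : G.PosBound (S.erase v) k) : G.PosBound S (k + 1) := by
  intro L hL hp
  have h1 := finrank_le_inf_ker L (LinearMap.proj v : (V → ℝ) →ₗ[ℝ] ℝ)
  have h2 := h (L ⊓ LinearMap.ker (LinearMap.proj v)) ?_ ?_
  · simp at h1
    omega
  · rintro x ⟨hx, hx'⟩ w hw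
    by_cases hwv : w = v
    · subst hwv; exact hx'
    · exact hL hx w fun hS => hw (mem_erase.2 ⟨hwv, hS⟩)
  · rintro x ⟨hx, -⟩ h0
    exact hp x hx h0

end SimpleGraph

/-! ### Critical vertex sets and the reduction step -/

namespace SimpleGraph

variable {V : Type*} [Fintype V]

/-- Cauchy–Schwarz: on a subspace where the form is nonpositive, null vectors are orthogonal to
everything. -/
theorem bf_eq_zero_of_null {G : SimpleGraph V} {M : Submodule ℝ (V → ℝ)}
    (hM : ∀ x ∈ M, G.bf x x ≤ 0) {x y : V → ℝ} (hx : x ∈ M) (hy : y ∈ M) (h0 : G.bf x x = 0) :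
    G.bf x y = 0 := by
  by_contra hne
  set β := G.bf x y with hβ
  have h := fun c : ℝ => hM (y + c • x) (M.add_mem hy (M.smul_mem c hx))
  have hexp : ∀ c : ℝ, G.bf (y + c • x) (y + c • x) = G.bf y y + 2 * c * β := by
    intro c
    have : G.bf y x = β := by rw [bf_comm]
    simp [h0, this, ← hβ]
    ring
  have h1 := h ((1 - G.bf y y) / (2 * β))
  rw [hexp] at h1
  have : 2 * ((1 - G.bf y y) / (2 * β)) * β = 1 - G.bf y y := by field_simp
  linarith

open Classical in
/-- A minimal vertex set violating the positive bound `b` carries a nondegenerate form, hence has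
exactly `b + 1 + (k + 1)` elements, and nonpositive subspaces are no larger than negative definite
ones. -/
theorem NegBound.critical {G : SimpleGraph V} {k b : ℕ}
    (hb : ∀ S, G.NegBound S k → G.PosBound S b) {S : Finset V} (h : G.NegBound S (k + 1))
    (hp : ¬ G.PosBound S b) : ∃ S', #S' = b + k + 2 ∧ G.NonposBound S' (k + 1) := by
  obtain ⟨T, hT, hmin⟩ := exists_minimal (s := S.powerset.filter fun T => ¬ G.PosBound T b)
    ⟨S, by simpa using hp⟩
  simp only [mem_filter, mem_powerset] at hT hmin
  have hers : ∀ v ∈ T, G.PosBound (T.erase v) b := by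
    intro v hv
    by_contra hn
    have := hmin ⟨(erase_subset v T).trans hT.1, hn⟩ (erase_subset v T)
    exact notMem_erase v T (this hv)
  have hneg : G.NegBound T (k + 1) := h.mono hT.1
  have hT2 := hT.2
  unfold PosBound at hT2
  push Not at hT2
  obtain ⟨L, hL, hpos, hLr⟩ := hT2
  have hTne : T.Nonempty := by
    rw [nonempty_iff_ne_empty]
    rintro rfl
    have := Submodule.finrank_mono hL
    rw [finrank_suppOn, card_empty] at this
    omega
  obtain ⟨v₀, hv₀⟩ := hTne
  have hb1 : G.PosBound T (b + 1) := (hers v₀ hv₀).of_erase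
  have hLb : Module.finrank ℝ L = b + 1 := le_antisymm (hb1 L hL hpos) hLr
  -- the orthogonal complement of `L`
  let f : (V → ℝ) →ₗ[ℝ] Module.Dual ℝ L := (Module.Dual.transpose L.subtype) ∘ₗ G.bf
  have hf : ∀ x (y : L), f x y = G.bf x y := fun x y => rfl
  have hdim := finrank_le_inf_ker (suppOn T) f
  rw [finrank_suppOn, Subspace.dual_finrank_eq, hLb] at hdim
  set M := suppOn T ⊓ LinearMap.ker f with hM
  have hMT : M ≤ suppOn T := inf_le_left
  have hperp : ∀ x ∈ M, ∀ y ∈ L, G.bf x y = 0 := by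
    rintro x ⟨-, hx⟩ y hy
    have := DFunLike.congr_fun (LinearMap.mem_ker.1 hx) ⟨y, hy⟩
    simpa [hf] using this
  have hMn : ∀ x ∈ M, G.bf x x ≤ 0 := by
    intro x hx
    by_contra! hq
    have := hb1.extend hL hpos (hMT hx) hq fun y hy => by rw [bf_comm, hperp x hx y hy]
    omega
  have hsum : ∀ x ∈ suppOn T, ∃ y ∈ L, ∃ z ∈ M, x = y + z := by
    have hdisj : L ⊓ M = ⊥ := by
      rw [eq_bot_iff]
      rintro x ⟨hx, hx'⟩
      by_contra hx0
      have h1 := hpos x hx hx0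
      have h2 := hMn x hx'
      linarith
    have h1 := Submodule.finrank_sup_add_finrank_inf_eq L M
    rw [hdisj, finrank_bot] at h1
    have h2 : L ⊔ M = suppOn T := by
      refine Submodule.eq_of_le_of_finrank_le (sup_le hL hMT) ?_
      rw [finrank_suppOn]
      omega
    intro x hx
    rw [← h2] at hx
    obtain ⟨y, hy, z, hz, rfl⟩ := Submodule.mem_sup.1 hx
    exact ⟨y, hy, z, hz, rfl⟩
  have hMneg : ∀ x ∈ M, x ≠ 0 → G.bf x x < 0 := by
    intro x hx hx0
    refine lt_of_le_of_ne (hMn x hx) fun hq => ?_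
    -- a null vector in `M` is in the kernel of the form on `T`, so some vertex is superfluous
    have hker : ∀ y ∈ suppOn T, G.bf x y = 0 := by
      intro y hy
      obtain ⟨y', hy', z, hz, rfl⟩ := hsum y hy
      rw [map_add, hperp x hx y' hy', bf_eq_zero_of_null hMn hx hz hq, add_zero]
    obtain ⟨v, hv⟩ : ∃ v, x v ≠ 0 := Function.ne_iff.1 hx0
    have hvT : v ∈ T := by
      by_contra hvT
      exact hv (hMT hx v hvT)
    let φ : (V → ℝ) →ₗ[ℝ] (V → ℝ) := LinearMap.id - (LinearMap.proj v).smulRight ((x v)⁻¹ • x)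
    have hφ : ∀ y, φ y = y - (y v * (x v)⁻¹) • x := fun y => by simp [φ, smul_smul]
    have hqφ : ∀ y ∈ L, G.bf (φ y) (φ y) = G.bf y y := by
      intro y hy
      have h1 := hker y (hL hy)
      have h2 : G.bf y x = 0 := by rw [bf_comm, h1]
      simp [hφ, h1, h2, hq]
    have hinj : Function.Injective (φ.domRestrict L) := by
      rintro ⟨y, hy⟩ ⟨z, hz⟩ hyz
      by_contra hne
      have h1 := hpos (y - z) (L.sub_mem hy hz) (sub_ne_zero.2 fun e => hne (Subtype.ext e))
      have h2 : φ y = φ z := hyz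
      rw [← hqφ _ (L.sub_mem hy hz), map_sub, h2] at h1
      simp at h1
    have h2 := hers v hvT (L.map φ) ?_ ?_
    · rw [← LinearMap.range_domRestrict, LinearMap.finrank_range_of_inj hinj] at h2
      omega
    · rintro _ ⟨y, hy, rfl⟩ w hw
      rw [hφ]
      by_cases hwv : w = v
      · subst hwv; simp [hv]
      · have hwT : w ∉ T := fun hwT => hw (mem_erase.2 ⟨hwv, hwT⟩)
        simp [hL hy w hwT, hMT hx w hwT]
    · rintro _ ⟨y, hy, rfl⟩ h0
      rw [hqφ y hy]
      exact hpos y hy fun e => h0 (by rw [e, map_zero])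
  have hle := hneg M hMT hMneg
  have hNP : ∀ M' : Submodule ℝ (V → ℝ), M' ≤ suppOn T → (∀ x ∈ M', G.bf x x ≤ 0) →
      Module.finrank ℝ M' + (b + 1) ≤ #T := by
    intro M' hM' hn'
    rw [← hLb]
    refine finrank_add_le hM' hL fun x hx hx' => ?_
    by_contra hx0
    have h1 := hn' x hx
    have h2 := hpos x hx' hx0
    linarith
  have hcard : b + k + 2 ≤ #T := by
    by_contra! hlt
    refine hT.2 (hb T fun M' hM' hn' => ?_)
    have := hNP M' hM' fun x hx => by
      by_cases hx0 : x = 0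
      · simp [hx0]
      · exact (hn' x hx hx0).le
    omega
  refine ⟨T, by omega, fun M' hM' hn' => ?_⟩
  have := hNP M' hM' hn'
  omega

/-- If `S` spans no edge, the form vanishes on vectors supported on `S`. -/
theorem bf_eq_zero_of_indep {G : SimpleGraph V} {S : Finset V}
    (h : ∀ a ∈ S, ∀ b ∈ S, ¬ G.Adj a b) {x : V → ℝ} (hx : x ∈ suppOn S) : G.bf x x = 0 := by
  rw [bf_apply]
  refine sum_eq_zero fun a _ => sum_eq_zero fun b _ => ?_
  split_ifs with hab
  · by_cases ha : a ∈ S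
    · rw [hx b fun hb => h a ha b hb hab, mul_zero]
    · rw [hx a ha, zero_mul]
  · rfl

theorem posBound_zero_of_indep {G : SimpleGraph V} {S : Finset V}
    (h : ∀ a ∈ S, ∀ b ∈ S, ¬ G.Adj a b) : G.PosBound S 0 := by
  intro L hL hp
  rw [Nat.le_zero, Submodule.finrank_eq_zero, eq_bot_iff]
  intro x hx
  by_contra hx0
  have := hp x hx hx0
  rw [bf_eq_zero_of_indep h (hL hx)] at this
  exact lt_irrefl _ this

theorem NegBound.zero {G : SimpleGraph V} {S : Finset V} (h : G.NegBound S 0) :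
    G.PosBound S 0 := by
  refine posBound_zero_of_indep fun a ha b hb hab => ?_
  have := h.extend (L := ⊥) (z := ev a - ev b) bot_le (fun x hx h0 => (h0 hx).elim)
    ((suppOn S).sub_mem (ev_mem ha) (ev_mem hb))
    (by simp [bf_ev_self, bf_ev_adj hab, bf_ev_adj hab.symm]) (fun x hx => by
      rw [(Submodule.mem_bot ℝ).1 hx]; simp)
  omega

open Classical in
/-- Without a `K₅` minor some non-isolated vertex has degree at most `5`; remove it together with its
neighbours. -/
theorem NegBound.step {G : SimpleGraph V} (hG : ¬ G.HasK5) {k b : ℕ}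
    (hb : ∀ S, G.NegBound S k → G.PosBound S b) {S : Finset V} (h : G.NegBound S (k + 1)) :
    G.PosBound S (b + 5) := by
  by_cases hind : ∀ a ∈ S, ∀ b ∈ S, ¬ G.Adj a b
  · exact (posBound_zero_of_indep hind).mono_right (by omega)
  push Not at hind
  obtain ⟨a₀, ha₀, b₀, hb₀, hab₀⟩ := hind
  obtain ⟨v, hv, u, hu, huv, hd⟩ : ∃ v ∈ S, ∃ u ∈ S, G.Adj v u ∧ #{w ∈ S | G.Adj v w} ≤ 5 := by
    by_contra! hcon
    let T := {v ∈ S | ∃ u ∈ S, G.Adj v u}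
    have hT : ∀ v ∈ T, 6 ≤ #{w ∈ T | G.Adj v w} := by
      intro v hv
      obtain ⟨hvS, u, hu, huv⟩ := mem_filter.1 hv
      refine (hcon v hvS u hu huv).trans_le (card_le_card fun w hw => ?_)
      simp only [mem_filter, T] at hw ⊢
      exact ⟨⟨hw.1, v, hvS, hw.2.symm⟩, hw.2⟩
    have h6 : 6 ≤ #T := (hT a₀ (mem_filter.2 ⟨ha₀, b₀, hb₀, hab₀⟩)).trans
      (card_le_card (filter_subset _ _))
    have h1 := sum_degree_le hG T (by omega)
    have h2 : ∑ v ∈ T, 6 ≤ ∑ v ∈ T, #{w ∈ T | G.Adj v w} := sum_le_sum hT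
    rw [sum_const, smul_eq_mul] at h2
    omega
  exact (hb _ (h.nonneighbors hv hu huv)).of_nonneighbors.mono_right (by omega)

end SimpleGraph

/-! ### `K₅` minors from a `5`-cycle with three hubs -/

/-- Twice the value at the difference of the indicator functions `a`, `b` of two subsets of a
`5`-cycle of the quadratic form of the inverse of its adjacency matrix. -/
def rimForm (a b : Fin 5 → Bool) : ℤ :=
  let x : Fin 5 → ℤ := fun i => (a i).toInt - (b i).toInt
  2 * (x 0 ^ 2 + x 1 ^ 2 + x 2 ^ 2 + x 3 ^ 2 + x 4 ^ 2) +
    4 * (x 0 * x 1 + x 1 * x 2 + x 2 * x 3 + x 3 * x 4 + x 4 * x 0) -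
    (x 0 + x 1 + x 2 + x 3 + x 4) ^ 2

/-- The incidences between three hubs and a `5`-cycle, rotated by `i`, which produce a `K₅` minor as
in `SimpleGraph.HasK5.of_rim`. -/
def rimPattern (a b c : Fin 5 → Bool) (i : Fin 5) : Bool :=
  a (2 + i) && a (4 + i) && b (3 + i) && c i && c (2 + i) && c (3 + i)

/-- Some rotation and some order of the three hubs shows the incidences of `rimPattern`. -/
def rimPatterns (a b c : Fin 5 → Bool) : Prop :=
  ∃ i, rimPattern a b c i ∨ rimPattern a c b i ∨ rimPattern b a c i ∨ rimPattern b c a i ∨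
    rimPattern c a b i ∨ rimPattern c b a i

instance (a b c) : Decidable (rimPatterns a b c) := by unfold rimPatterns; infer_instance

set_option maxRecDepth 100000 in
set_option maxHeartbeats 4000000 in
/-- A finite check over all triples of subsets of a `5`-cycle. -/
theorem rimPatterns_aux : ∀ a0 a1 a2 a3 a4 b0 b1 b2 b3 b4 : Bool,
    rimForm ![a0, a1, a2, a3, a4] ![b0, b1, b2, b3, b4] < 0 → ∀ c0 c1 c2 c3 c4 : Bool,
    rimForm ![a0, a1, a2, a3, a4] ![c0, c1, c2, c3, c4] < 0 →
    rimForm ![b0, b1, b2, b3, b4] ![c0, c1, c2, c3, c4] < 0 →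
    rimPatterns ![a0, a1, a2, a3, a4] ![b0, b1, b2, b3, b4] ![c0, c1, c2, c3, c4] := by
  decide +kernel

theorem rimPatterns_of_form (a b c : Fin 5 → Bool) (hab : rimForm a b < 0)
    (hac : rimForm a c < 0) (hbc : rimForm b c < 0) : rimPatterns a b c := by
  have e : ∀ f : Fin 5 → Bool, f = ![f 0, f 1, f 2, f 3, f 4] := by
    intro f; ext i; fin_cases i <;> rfl
  rw [e a, e b] at hab ⊢
  rw [e a, e c] at hac
  rw [e b, e c] at hbc
  rw [e c]
  exact rimPatterns_aux _ _ _ _ _ _ _ _ _ _ hab _ _ _ _ _ hac hbc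

/-- The `K₅` minor in a `5`-cycle `r` with three hubs `a`, `b`, `c` that are joined to the rim as in
`rimPattern` and have a common neighbour `v` off the rim. -/
theorem SimpleGraph.HasK5.of_rim {V : Type*} {G : SimpleGraph V} {v a b c r0 r1 r2 r3 r4 : V}
    (va : G.Adj v a) (vb : G.Adj v b) (vc : G.Adj v c)
    (h01 : G.Adj r0 r1) (h12 : G.Adj r1 r2) (h23 : G.Adj r2 r3) (h34 : G.Adj r3 r4)
    (h40 : G.Adj r4 r0) (hv : v ∉ [r0, r1, r2, r3, r4]) (ha : a ∉ [r0, r1, r2, r3, r4])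
    (hb : b ∉ [r0, r1, r2, r3, r4]) (hc : c ∉ [r0, r1, r2, r3, r4])
    (hac : a ≠ c) (hbc : b ≠ c) (hr : r0 ≠ r2 ∧ r0 ≠ r3 ∧ r1 ≠ r3 ∧ r2 ≠ r4)
    (a2 : G.Adj a r2) (a4 : G.Adj a r4) (b3 : G.Adj b r3) (c0 : G.Adj c r0) (c2 : G.Adj c r2)
    (c3 : G.Adj c r3) : G.HasK5 := by
  have := va.ne; have := vb.ne; have := vc.ne
  have := h01.ne; have := h12.ne; have := h23.ne; have := h34.ne; have := h40.ne
  simp only [List.mem_cons, List.not_mem_nil, or_false, not_or] at hv ha hb hc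
  refine .of_lt ![{a, b, v}, {c}, {r4, r1, r0}, {r2}, {r3}] ?_ ?_ ?_ ?_
  · intro i; fin_cases i <;> simp
  · intro i
    fin_cases i
    · exact ((ConnIn.singleton G v).insert_vertex rfl vb.symm).insert_vertex (by simp) va.symm
    · exact .singleton _ _
    · exact ((ConnIn.singleton G r0).insert_vertex rfl h01.symm).insert_vertex (by simp) h40
    · exact .singleton _ _
    · exact .singleton _ _
  · intro i j hij
    fin_cases i <;> fin_cases j <;> first | (exfalso; revert hij; decide) | (simp; grind)
  · intro i j hij
    fin_cases i <;> fin_cases j <;> first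
      | (exfalso; revert hij; decide)
      | (refine ⟨v, ?_, c, ?_, vc⟩ <;> simp; done)
      | (refine ⟨a, ?_, r4, ?_, a4⟩ <;> simp; done)
      | (refine ⟨a, ?_, r2, ?_, a2⟩ <;> simp; done)
      | (refine ⟨b, ?_, r3, ?_, b3⟩ <;> simp; done)
      | (refine ⟨c, ?_, r0, ?_, c0⟩ <;> simp; done)
      | (refine ⟨c, ?_, r2, ?_, c2⟩ <;> simp; done)
      | (refine ⟨c, ?_, r3, ?_, c3⟩ <;> simp; done)
      | (refine ⟨r1, ?_, r2, ?_, h12⟩ <;> simp; done)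
      | (refine ⟨r4, ?_, r3, ?_, h34.symm⟩ <;> simp; done)
      | (refine ⟨r2, ?_, r3, ?_, h23⟩ <;> simp)

/-! ### Zero-sum vectors and negative index one -/

namespace SimpleGraph

variable {V : Type*} [Fintype V]

theorem eq_sum_ev {S : Finset V} {y : V → ℝ} (hy : y ∈ suppOn S) : y = ∑ t ∈ S, y t • ev t := by
  classical
  ext v
  simp only [Finset.sum_apply, Pi.smul_apply, ev_apply, smul_eq_mul, mul_ite, mul_one, mul_zero]
  rw [Finset.sum_ite_eq]
  split_ifs with h
  · rfl
  · exact hy v h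

theorem bf_of_suppOn {G : SimpleGraph V} {S : Finset V} {y : V → ℝ} (hy : y ∈ suppOn S)
    (z : V → ℝ) : G.bf y z = ∑ t ∈ S, y t * G.bf (ev t) z := by
  conv_lhs => rw [eq_sum_ev hy]
  simp

/-- An independent set, together with a nonpositive vector orthogonal to it, spans a nonpositive
space. -/
theorem NonposBound.indep_extend {G : SimpleGraph V} {S I : Finset V} {k : ℕ}
    (h : G.NonposBound S k) (hI : I ⊆ S) (hi : ∀ a ∈ I, ∀ b ∈ I, ¬ G.Adj a b) {z : V → ℝ}
    (hz : z ∈ suppOn S) (hzI : ∃ a ∉ I, z a ≠ 0) (hq : G.bf z z ≤ 0)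
    (ho : ∀ t ∈ I, G.bf (ev t) z = 0) : #I + 1 ≤ k := by
  rw [← finrank_suppOn I]
  refine h.extend (suppOn_mono hI) (fun x hx => (bf_eq_zero_of_indep hi hx).le) hz ?_ hq ?_
  · obtain ⟨a, ha, hza⟩ := hzI
    exact fun hz' => hza (hz' a ha)
  · intro x hx
    rw [bf_of_suppOn hx]
    exact sum_eq_zero fun t ht => by rw [ho t ht, mul_zero]

theorem NonposBound.indep {G : SimpleGraph V} {S I : Finset V} {k : ℕ}
    (h : G.NonposBound S k) (hI : I ⊆ S) (hi : ∀ a ∈ I, ∀ b ∈ I, ¬ G.Adj a b) : #I ≤ k := by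
  rw [← finrank_suppOn I]
  exact h _ (suppOn_mono hI) fun x hx => (bf_eq_zero_of_indep hi hx).le

/-- The vectors supported on `W` with coordinate sum zero. -/
def zeroSum (W : Finset V) : Submodule ℝ (V → ℝ) :=
  suppOn W ⊓ LinearMap.ker (∑ v ∈ W, LinearMap.proj v : (V → ℝ) →ₗ[ℝ] ℝ)

theorem mem_zeroSum {W : Finset V} {x : V → ℝ} :
    x ∈ zeroSum W ↔ x ∈ suppOn W ∧ ∑ v ∈ W, x v = 0 := by
  simp [zeroSum]

theorem card_le_finrank_zeroSum (W : Finset V) : #W ≤ Module.finrank ℝ (zeroSum W) + 1 := by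
  have := finrank_le_inf_ker (suppOn W) (∑ v ∈ W, LinearMap.proj v : (V → ℝ) →ₗ[ℝ] ℝ)
  rw [finrank_suppOn, Module.finrank_self] at this
  exact this

open Classical in
/-- If every vertex of `W` misses at most one other vertex of `W`, then the form is nonpositive
on zero-sum vectors. -/
theorem bf_zeroSum_nonpos {G : SimpleGraph V} {W : Finset V}
    (hW : ∀ a ∈ W, #{b ∈ W | b ≠ a ∧ ¬ G.Adj a b} ≤ 1) {x : V → ℝ} (hx : x ∈ zeroSum W) :
    G.bf x x ≤ 0 := by
  obtain ⟨hx, hs⟩ := mem_zeroSum.1 hx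
  have h1 : G.bf x x = ∑ a ∈ W, ∑ b ∈ W, if G.Adj a b then x a * x b else 0 := by
    rw [bf_apply]
    symm
    refine sum_subset_zero_on_sdiff (subset_univ _) ?_ ?_
    · intro a ha
      have : x a = 0 := hx a (by simpa using ha)
      simp [this]
    · intro a _
      refine sum_subset_zero_on_sdiff (subset_univ _) ?_ fun _ _ => rfl
      intro b hb
      have : x b = 0 := hx b (by simpa using hb)
      simp [this]
  -- the non-adjacent pairs off the diagonal
  let N : V → V → ℝ := fun a b => if b ≠ a ∧ ¬ G.Adj a b then 1 else 0
  have hN : ∀ a b, N a b = N b a := by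
    intro a b
    simp only [N, ne_comm (a := a), G.adj_comm a]
  have h2 : ∑ a ∈ W, ∑ b ∈ W, (if G.Adj a b then x a * x b else 0) =
      ∑ a ∈ W, ∑ b ∈ W, (x a * x b - (if b = a then x a * x b else 0) - N a b * (x a * x b)) := by
    refine sum_congr rfl fun a _ => sum_congr rfl fun b _ => ?_
    by_cases hab : b = a
    · subst hab; simp [N]
    · by_cases h : G.Adj a b <;> simp [N, hab, h]
  have h3 : ∑ a ∈ W, ∑ b ∈ W, x a * x b = 0 := by
    rw [← sum_mul_sum, hs, zero_mul]
  have h4 : ∑ a ∈ W, ∑ b ∈ W, (if b = a then x a * x b else 0) = ∑ a ∈ W, x a ^ 2 := by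
    refine sum_congr rfl fun a ha => ?_
    rw [sum_ite_eq' W a, if_pos ha, sq]
  have hrow : ∀ a ∈ W, ∑ b ∈ W, N a b ≤ 1 := by
    intro a ha
    simp only [N, sum_boole]
    exact_mod_cast hW a ha
  have h5 : ∑ a ∈ W, ∑ b ∈ W, N a b * x a ^ 2 ≤ ∑ a ∈ W, x a ^ 2 := by
    refine sum_le_sum fun a ha => ?_
    rw [← sum_mul]
    nlinarith [hrow a ha, sq_nonneg (x a)]
  have h6 : ∑ a ∈ W, ∑ b ∈ W, N a b * x b ^ 2 = ∑ a ∈ W, ∑ b ∈ W, N a b * x a ^ 2 := by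
    rw [sum_comm]
    exact sum_congr rfl fun a _ => sum_congr rfl fun b _ => by rw [hN]
  have h7 : 0 ≤ ∑ a ∈ W, ∑ b ∈ W, N a b * (x a + x b) ^ 2 := by
    refine sum_nonneg fun a _ => sum_nonneg fun b _ => mul_nonneg ?_ (sq_nonneg _)
    simp only [N]; split_ifs <;> norm_num
  have h8 : ∑ a ∈ W, ∑ b ∈ W, N a b * (x a + x b) ^ 2 = ∑ a ∈ W, ∑ b ∈ W, N a b * x a ^ 2 +
      ∑ a ∈ W, ∑ b ∈ W, N a b * x b ^ 2 + 2 * ∑ a ∈ W, ∑ b ∈ W, N a b * (x a * x b) := by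
    simp only [mul_sum, ← sum_add_distrib]
    exact sum_congr rfl fun a _ => sum_congr rfl fun b _ => by ring
  simp only [sum_sub_distrib] at h2
  linarith

open Classical in
/-- The zero-sum vectors on a nearly complete set `W` form a nonpositive space of dimension
`#W - 1`. -/
theorem NonposBound.zeroSum_le {G : SimpleGraph V} {S W : Finset V} {k : ℕ}
    (h : G.NonposBound S k) (hWS : W ⊆ S) (hW : ∀ a ∈ W, #{b ∈ W | b ≠ a ∧ ¬ G.Adj a b} ≤ 1) :
    #W ≤ k + 1 :=
  (card_le_finrank_zeroSum W).trans (Nat.succ_le_succ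
    (h _ (inf_le_left.trans (suppOn_mono hWS)) fun _ hx => bf_zeroSum_nonpos hW hx))

open Classical in
/-- A nonpositive vector `z` whose pairing with the vertices of `W` is constant is orthogonal to the
zero-sum vectors on `W`, and adds one dimension to them. -/
theorem NonposBound.zeroSum_extend {G : SimpleGraph V} {S W : Finset V} {k : ℕ}
    (h : G.NonposBound S k) (hWS : W ⊆ S) (hW : ∀ a ∈ W, #{b ∈ W | b ≠ a ∧ ¬ G.Adj a b} ≤ 1)
    {z : V → ℝ} (hz : z ∈ suppOn S) (hzW : ∃ a ∉ W, z a ≠ 0) (hq : G.bf z z ≤ 0) (c : ℝ)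
    (ho : ∀ t ∈ W, G.bf (ev t) z = c) : #W ≤ k := by
  refine (card_le_finrank_zeroSum W).trans (h.extend (inf_le_left.trans (suppOn_mono hWS))
    (fun _ hx => bf_zeroSum_nonpos hW hx) hz ?_ hq ?_)
  · obtain ⟨a, ha, hza⟩ := hzW
    exact fun hz' => hza ((mem_zeroSum.1 hz').1 a ha)
  · intro x hx
    obtain ⟨hx, hs⟩ := mem_zeroSum.1 hx
    rw [bf_of_suppOn hx, sum_congr rfl fun t ht => by rw [ho t ht], ← sum_mul, hs, zero_mul]

theorem NonposBound.one {G : SimpleGraph V} {S : Finset V} (h : G.NonposBound S 1) : #S ≤ 2 := by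
  classical
  refine h.zeroSum_le subset_rfl fun a ha => ?_
  have : ({b ∈ S | b ≠ a ∧ ¬ G.Adj a b} : Finset V) = ∅ := by
    rw [filter_eq_empty_iff]
    rintro b hb ⟨hne, hab⟩
    have := h.indep (I := {a, b}) (by simp [insert_subset_iff, ha, hb])
      (by simp [hab, G.adj_comm b a])
    rw [card_pair hne.symm] at this
    omega
  simp [this]

theorem NegBound.one {G : SimpleGraph V} {S : Finset V} (h : G.NegBound S 1) : G.PosBound S 1 := by
  by_contra hp
  obtain ⟨S', hc, hn⟩ := NegBound.critical (k := 0) (b := 1)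
    (fun S h => (NegBound.zero h).mono_right (by omega)) h hp
  have := hn.one
  omega

end SimpleGraph

/-! ### Negative index two -/

namespace SimpleGraph

variable {V : Type*} [Fintype V]

/-- A nonpositive vector with constant pairing against a triangle enlarges the two-dimensional
nonpositive space of zero-sum vectors on that triangle. -/
theorem NonposBound.triangle_aux {G : SimpleGraph V} {S : Finset V} (h : G.NonposBound S 2)
    {x y w a : V} (hx : x ∈ S) (hy : y ∈ S) (hw : w ∈ S) (xy : G.Adj x y) (xw : G.Adj x w)
    (yw : G.Adj y w) (ha : a ≠ x ∧ a ≠ y ∧ a ≠ w) {z : V → ℝ} (hz : z ∈ suppOn S) (hza : z a ≠ 0)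
    (hq : G.bf z z ≤ 0) (c : ℝ) (h1 : G.bf (ev x) z = c) (h2 : G.bf (ev y) z = c)
    (h3 : G.bf (ev w) z = c) : False := by
  classical
  have hxy := xy.ne
  have hxw := xw.ne
  have hyw := yw.ne
  have := h.zeroSum_extend (W := {x, y, w}) (by simp [insert_subset_iff, *]) ?_ hz
    ⟨a, by simp [ha], hza⟩ hq c (by simp [*])
  · rw [card_eq_three.2 ⟨x, y, w, hxy, hxw, hyw, rfl⟩] at this
    omega
  · intro t ht
    refine (card_eq_zero.2 ?_).trans_le zero_le_one
    rw [filter_eq_empty_iff]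
    rintro s hs ⟨h1, h2⟩
    simp only [mem_insert, mem_singleton] at hs ht
    rcases hs with rfl | rfl | rfl <;> rcases ht with rfl | rfl | rfl <;>
      simp_all [G.adj_comm]

/-- With no nonpositive space of dimension `3`, every vertex off a triangle has exactly one
neighbour on it. -/
theorem NonposBound.triangle_one {G : SimpleGraph V} {S : Finset V} (h : G.NonposBound S 2)
    {x y w a : V} (hx : x ∈ S) (hy : y ∈ S) (hw : w ∈ S) (xy : G.Adj x y) (xw : G.Adj x w)
    (yw : G.Adj y w) (ha : a ≠ x ∧ a ≠ y ∧ a ≠ w) (haS : a ∈ S) :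
    (G.Adj a x ∧ ¬ G.Adj a y ∧ ¬ G.Adj a w) ∨ (G.Adj a y ∧ ¬ G.Adj a x ∧ ¬ G.Adj a w) ∨
      (G.Adj a w ∧ ¬ G.Adj a x ∧ ¬ G.Adj a y) := by
  -- if `a` has two neighbours in a triangle, then it is a twin of the third vertex
  have two : ∀ x ∈ S, ∀ y ∈ S, ∀ w ∈ S, G.Adj x y → G.Adj x w → G.Adj y w →
      (a ≠ x ∧ a ≠ y ∧ a ≠ w) → G.Adj a x → G.Adj a y → ¬ G.Adj a w → False := by
    intro x hx y hy w hw xy xw yw ha ax ay aw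
    refine h.triangle_aux (z := ev a - ev w) hx hy hw xy xw yw ha
      ((suppOn S).sub_mem (ev_mem haS) (ev_mem hw)) (by simp [ev_of_ne ha.2.2]) ?_ 0 ?_ ?_ ?_ <;>
    simp [bf_ev, aw, ax.symm, ay.symm, xw, yw, G.adj_comm w a]
  have const : ∀ c : ℝ, ¬ (G.bf (ev x) (ev a) = c ∧ G.bf (ev y) (ev a) = c ∧
      G.bf (ev w) (ev a) = c) := fun c ⟨h1, h2, h3⟩ =>
    h.triangle_aux (z := ev a) hx hy hw xy xw yw ha (ev_mem haS) (by simp) (bf_ev_self G a).le c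
      h1 h2 h3
  by_cases ax : G.Adj a x <;> by_cases ay : G.Adj a y <;> by_cases aw : G.Adj a w
  · exact (const 1 ⟨bf_ev_adj ax.symm, bf_ev_adj ay.symm, bf_ev_adj aw.symm⟩).elim
  · exact (two x hx y hy w hw xy xw yw ha ax ay aw).elim
  · exact (two x hx w hw y hy xw xy yw.symm ⟨ha.1, ha.2.2, ha.2.1⟩ ax aw ay).elim
  · exact .inl ⟨ax, ay, aw⟩
  · exact (two y hy w hw x hx yw xy.symm xw.symm ⟨ha.2.1, ha.2.2, ha.1⟩ ay aw ax).elim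
  · exact .inr (.inl ⟨ay, ax, aw⟩)
  · exact .inr (.inr ⟨aw, ax, ay⟩)
  · exact (const 0 ⟨bf_ev_not fun e => ax e.symm, bf_ev_not fun e => ay e.symm,
      bf_ev_not fun e => aw e.symm⟩).elim

/-- Two vertices off a triangle, each with one neighbour on it, always give a nonpositive vector
orthogonal to the zero-sum vectors of the triangle. -/
theorem NonposBound.triangle {G : SimpleGraph V} {S : Finset V} (h : G.NonposBound S 2)
    {x y w a b : V} (hx : x ∈ S) (hy : y ∈ S) (hw : w ∈ S) (xy : G.Adj x y) (xw : G.Adj x w)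
    (yw : G.Adj y w) (haS : a ∈ S) (hbS : b ∈ S) (ha : a ≠ x ∧ a ≠ y ∧ a ≠ w)
    (hb : b ≠ x ∧ b ≠ y ∧ b ≠ w) (hab : a ≠ b) : False := by
  have same : ∀ x ∈ S, ∀ y ∈ S, ∀ w ∈ S, G.Adj x y → G.Adj x w → G.Adj y w →
      (a ≠ x ∧ a ≠ y ∧ a ≠ w) → (G.Adj a x ∧ ¬ G.Adj a y ∧ ¬ G.Adj a w) →
      (G.Adj b x ∧ ¬ G.Adj b y ∧ ¬ G.Adj b w) → False := by
    rintro x hx y hy w hw xy xw yw ha ⟨ax, ay, aw⟩ ⟨bx, bY, bw⟩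
    refine h.triangle_aux (z := ev a - ev b) hx hy hw xy xw yw ha
      ((suppOn S).sub_mem (ev_mem haS) (ev_mem hbS)) (by simp [ev_of_ne hab]) ?_ 0 ?_ ?_ ?_
    · by_cases e : G.Adj a b
      · simp [bf_ev, e, e.symm]
      · simp [bf_ev, e, G.adj_comm b a]
    all_goals simp [bf_ev, ay, aw, ax.symm, bx.symm, bY, bw, G.adj_comm y, G.adj_comm w]
  have diff : ∀ x ∈ S, ∀ y ∈ S, ∀ w ∈ S, G.Adj x y → G.Adj x w → G.Adj y w →
      (a ≠ x ∧ a ≠ y ∧ a ≠ w) → (G.Adj a x ∧ ¬ G.Adj a y ∧ ¬ G.Adj a w) →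
      (G.Adj b y ∧ ¬ G.Adj b x ∧ ¬ G.Adj b w) → False := by
    rintro x hx y hy w hw xy xw yw ha ⟨ax, ay, aw⟩ ⟨bY, bx, bw⟩
    have yx := xy.symm
    have wx := xw.symm
    have wy := yw.symm
    have xa := ax.symm
    have yb := bY.symm
    have ya : ¬ G.Adj y a := fun e => ay e.symm
    have wa : ¬ G.Adj w a := fun e => aw e.symm
    have xb : ¬ G.Adj x b := fun e => bx e.symm
    have wb : ¬ G.Adj w b := fun e => bw e.symm
    by_cases e : G.Adj a b
    · refine h.triangle_aux (z := ev a + ev x - ev b - ev y) hx hy hw xy xw yw ha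
        ((suppOn S).sub_mem ((suppOn S).sub_mem ((suppOn S).add_mem (ev_mem haS) (ev_mem hx))
          (ev_mem hbS)) (ev_mem hy))
        (by simp [ev_of_ne hab, ev_of_ne ha.1, ev_of_ne ha.2.1]) ?_ 0 ?_ ?_ ?_
      · simp [bf_ev, e.symm, *]
      all_goals simp [bf_ev, *]
    · refine h.triangle_aux (z := ev a + ev b - ev w) hx hy hw xy xw yw ha
        ((suppOn S).sub_mem ((suppOn S).add_mem (ev_mem haS) (ev_mem hbS)) (ev_mem hw))
        (by simp [ev_of_ne hab, ev_of_ne ha.2.2]) ?_ 0 ?_ ?_ ?_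
      · simp [bf_ev, G.adj_comm b a, *]
      all_goals simp [bf_ev, *]
  have ra := h.triangle_one hx hy hw xy xw yw ha haS
  have rb := h.triangle_one hx hy hw xy xw yw hb hbS
  obtain ⟨a1, a2, a3⟩ := ha
  rcases ra with ⟨p, q, r⟩ | ⟨p, q, r⟩ | ⟨p, q, r⟩ <;>
    rcases rb with ⟨p', q', r'⟩ | ⟨p', q', r'⟩ | ⟨p', q', r'⟩
  · exact same x hx y hy w hw xy xw yw ⟨a1, a2, a3⟩ ⟨p, q, r⟩ ⟨p', q', r'⟩
  · exact diff x hx y hy w hw xy xw yw ⟨a1, a2, a3⟩ ⟨p, q, r⟩ ⟨p', q', r'⟩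
  · exact diff x hx w hw y hy xw xy yw.symm ⟨a1, a3, a2⟩ ⟨p, r, q⟩ ⟨p', q', r'⟩
  · exact diff y hy x hx w hw xy.symm yw xw ⟨a2, a1, a3⟩ ⟨p, q, r⟩ ⟨p', q', r'⟩
  · exact same y hy x hx w hw xy.symm yw xw ⟨a2, a1, a3⟩ ⟨p, q, r⟩ ⟨p', q', r'⟩
  · exact diff y hy w hw x hx yw xy.symm xw.symm ⟨a2, a3, a1⟩ ⟨p, r, q⟩ ⟨p', r', q'⟩
  · exact diff w hw x hx y hy xw.symm yw.symm xy ⟨a3, a1, a2⟩ ⟨p, q, r⟩ ⟨p', r', q'⟩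
  · exact diff w hw y hy x hx yw.symm xw.symm xy.symm ⟨a3, a2, a1⟩ ⟨p, r, q⟩ ⟨p', r', q'⟩
  · exact same w hw x hx y hy xw.symm yw.symm xy ⟨a3, a1, a2⟩ ⟨p, q, r⟩ ⟨p', q', r'⟩

theorem NonposBound.not_triangle {G : SimpleGraph V} {S : Finset V} (h : G.NonposBound S 2)
    (hS : 5 ≤ #S) {x y w : V} (hx : x ∈ S) (hy : y ∈ S) (hw : w ∈ S) (xy : G.Adj x y)
    (xw : G.Adj x w) (yw : G.Adj y w) : False := by
  classical
  have h3 : #({x, y, w} : Finset V) = 3 := card_eq_three.2 ⟨x, y, w, xy.ne, xw.ne, yw.ne, rfl⟩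
  have h2 : 1 < #(S \ {x, y, w}) := by
    have := le_card_sdiff ({x, y, w} : Finset V) S
    omega
  obtain ⟨a, ha, b, hb, hab⟩ := one_lt_card.1 h2
  simp only [mem_sdiff, mem_insert, mem_singleton, not_or] at ha hb
  exact h.triangle hx hy hw xy xw yw ha.1 hb.1 ha.2 hb.2 hab

theorem NonposBound.not_indep {G : SimpleGraph V} {S : Finset V} (h : G.NonposBound S 2)
    {x y w : V} (hx : x ∈ S) (hy : y ∈ S) (hw : w ∈ S) (hxy : x ≠ y) (hxw : x ≠ w) (hyw : y ≠ w)
    (xy : ¬ G.Adj x y) (xw : ¬ G.Adj x w) (yw : ¬ G.Adj y w) : False := by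
  classical
  have := h.indep (I := {x, y, w}) (by simp [insert_subset_iff, *])
    (by simp [*, G.adj_comm y x, G.adj_comm w])
  rw [card_eq_three.2 ⟨x, y, w, hxy, hxw, hyw, rfl⟩] at this
  omega

open Classical in
theorem card_nbrs_nonnbrs (G : SimpleGraph V) {S : Finset V} {v : V} (hv : v ∈ S) :
    #S = 1 + #{w ∈ S | G.Adj v w} + #{w ∈ S | w ≠ v ∧ ¬ G.Adj v w} := by
  rw [← card_singleton v, ← card_union_of_disjoint, ← card_union_of_disjoint]
  · congr 1
    ext w
    simp only [mem_union, mem_singleton, mem_filter]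
    constructor
    · intro hw
      by_cases e : w = v <;> by_cases e' : G.Adj v w <;> simp [*]
    · rintro ((rfl | h) | h)
      exacts [hv, h.1, h.1]
  · rw [Finset.disjoint_left]
    simp only [mem_union, mem_singleton, mem_filter]
    rintro w (rfl | h) h'
    exacts [h'.2.1 rfl, h'.2.2 h.2]
  · rw [Finset.disjoint_left]
    simp only [mem_singleton, mem_filter]
    rintro w rfl h
    exact h.2.ne rfl

open Classical in
/-- Among three neighbours of `v` two are adjacent, as there is no independent triple, and form a
triangle with `v`; among three non-neighbours two are not adjacent, as there is no triangle, and form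
an independent triple with `v`. -/
theorem NonposBound.two_nbrs {G : SimpleGraph V} {S : Finset V} (h : G.NonposBound S 2)
    (hS : 5 ≤ #S) {v : V} (hv : v ∈ S) :
    #{w ∈ S | G.Adj v w} ≤ 2 ∧ #{w ∈ S | w ≠ v ∧ ¬ G.Adj v w} ≤ 2 ∧
      #S = 1 + #{w ∈ S | G.Adj v w} + #{w ∈ S | w ≠ v ∧ ¬ G.Adj v w} := by
  refine ⟨?_, ?_, ?_⟩
  · by_contra! hc
    obtain ⟨a, ha, b, hb, c, hc, hab, hac, hbc⟩ := two_lt_card.1 hc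
    simp only [mem_filter] at ha hb hc
    by_cases e1 : G.Adj a b
    · exact h.not_triangle hS hv ha.1 hb.1 ha.2 hb.2 e1
    by_cases e2 : G.Adj a c
    · exact h.not_triangle hS hv ha.1 hc.1 ha.2 hc.2 e2
    by_cases e3 : G.Adj b c
    · exact h.not_triangle hS hv hb.1 hc.1 hb.2 hc.2 e3
    exact h.not_indep ha.1 hb.1 hc.1 hab hac hbc e1 e2 e3
  · by_contra! hc
    obtain ⟨a, ha, b, hb, c, hc, hab, hac, hbc⟩ := two_lt_card.1 hc
    simp only [mem_filter] at ha hb hc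
    by_cases e1 : G.Adj a b
    · by_cases e2 : G.Adj a c
      · by_cases e3 : G.Adj b c
        · exact h.not_triangle hS ha.1 hb.1 hc.1 e1 e2 e3
        · exact h.not_indep hv hb.1 hc.1 hb.2.1.symm hc.2.1.symm hbc hb.2.2 hc.2.2 e3
      · exact h.not_indep hv ha.1 hc.1 ha.2.1.symm hc.2.1.symm hac ha.2.2 hc.2.2 e2
    · exact h.not_indep hv ha.1 hb.1 ha.2.1.symm hb.2.1.symm hab ha.2.2 hb.2.2 e1
  · exact G.card_nbrs_nonnbrs hv

theorem NonposBound.two {G : SimpleGraph V} {S : Finset V} (h : G.NonposBound S 2) : #S ≤ 5 := by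
  by_contra! hc
  obtain ⟨v, hv⟩ := card_pos.1 (by omega : 0 < #S)
  have := h.two_nbrs hc.le hv
  omega

theorem NegBound.two {G : SimpleGraph V} {S : Finset V} (h : G.NegBound S 2) : G.PosBound S 3 := by
  by_contra hp
  obtain ⟨S', hc, hn⟩ := NegBound.critical (k := 1) (b := 3)
    (fun S h => (NegBound.one h).mono_right (by omega)) h hp
  have := hn.two
  omega

/-- A five-element set admitting no nonpositive space of dimension `3` induces a `5`-cycle. -/
theorem NonposBound.exists_cycle {G : SimpleGraph V} {S : Finset V} (h : G.NonposBound S 2)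
    (hS : #S = 5) : ∃ r : Fin 5 → V, Function.Injective r ∧ (∀ i, r i ∈ S) ∧
      ∀ i j, G.Adj (r i) (r j) ↔ j = i + 1 ∨ i = j + 1 := by
  classical
  obtain ⟨v, hv⟩ := card_pos.1 (by omega : 0 < #S)
  obtain ⟨h1, h2, h3⟩ := h.two_nbrs hS.ge hv
  obtain ⟨p, q, hpq, hN⟩ := card_eq_two.1 (by omega : #{w ∈ S | G.Adj v w} = 2)
  obtain ⟨a, b, hab, hM⟩ := card_eq_two.1 (by omega : #{w ∈ S | w ≠ v ∧ ¬ G.Adj v w} = 2)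
  have hp : p ∈ S ∧ G.Adj v p := by
    have : p ∈ ({p, q} : Finset V) := by simp
    rwa [← hN, mem_filter] at this
  have hq : q ∈ S ∧ G.Adj v q := by
    have : q ∈ ({p, q} : Finset V) := by simp
    rwa [← hN, mem_filter] at this
  have ha : a ∈ S ∧ a ≠ v ∧ ¬ G.Adj v a := by
    have : a ∈ ({a, b} : Finset V) := by simp
    rwa [← hM, mem_filter] at this
  have hb : b ∈ S ∧ b ≠ v ∧ ¬ G.Adj v b := by
    have : b ∈ ({a, b} : Finset V) := by simp
    rwa [← hM, mem_filter] at this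
  have key : ∀ p ∈ S, ∀ q ∈ S, p ≠ q → G.Adj v p → G.Adj v q → G.Adj a p →
      ∃ r : Fin 5 → V, Function.Injective r ∧ (∀ i, r i ∈ S) ∧
      ∀ i j, G.Adj (r i) (r j) ↔ j = i + 1 ∨ i = j + 1 := by
    intro p hp q hq hpq vp vq ap
    obtain ⟨ha, hav, va⟩ := ha
    obtain ⟨hb, hbv, vb⟩ := hb
    have e1 : ¬ G.Adj p q := fun e => h.not_triangle hS.ge hv hp hq vp vq e
    have e2 : G.Adj a b := by
      by_contra e
      exact h.not_indep hv ha hb hav.symm hbv.symm hab va vb e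
    have e3 : ¬ G.Adj p b := fun e => h.not_triangle hS.ge hp ha hb ap.symm e e2
    have hpb : p ≠ b := fun e => vb (e ▸ vp)
    have hqb : q ≠ b := fun e => vb (e ▸ vq)
    have hqa : q ≠ a := fun e => va (e ▸ vq)
    have e4 : G.Adj q b := by
      by_contra e
      exact h.not_indep hp hq hb hpq hpb hqb e1 e3 e
    have e5 : ¬ G.Adj q a := fun e => h.not_triangle hS.ge hq ha hb e e4 e2
    have hvp := vp.ne
    have hvq := vq.ne
    have hap := ap.ne
    refine ⟨![v, p, a, b, q], ?_, ?_, ?_⟩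
    · intro i j
      fin_cases i <;> fin_cases j <;> simp [*, hav.symm, hbv.symm, hab.symm, hpq.symm,
        hpb.symm, hqb.symm, hqa.symm, hvp.symm, hvq.symm, hap.symm]
    · intro i
      fin_cases i <;> simp [*]
    · have := vp.symm; have := vq.symm; have := ap.symm; have := e2.symm; have := e4.symm
      have : ¬ G.Adj q p := fun e => e1 e.symm
      have : ¬ G.Adj b p := fun e => e3 e.symm
      have : ¬ G.Adj a q := fun e => e5 e.symm
      have : ¬ G.Adj a v := fun e => va e.symm
      have : ¬ G.Adj b v := fun e => vb e.symm
      intro i j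
      fin_cases i <;> fin_cases j <;> simp [*]
  by_cases hap : G.Adj a p
  · exact key p hp.1 q hq.1 hpq hp.2 hq.2 hap
  · refine key q hq.1 p hp.1 hpq.symm hq.2 hp.2 ?_
    by_contra haq
    exact h.not_indep ha.1 hp.1 hq.1 (fun e => ha.2.2 (e ▸ hp.2)) (fun e => ha.2.2 (e ▸ hq.2)) hpq
      hap haq fun e => h.not_triangle hS.ge hv hp.1 hq.1 hp.2 hq.2 e

end SimpleGraph

/-! ### Attachments to a `5`-cycle -/

namespace SimpleGraph

variable {V : Type*} [Fintype V]

/-- Linearly independent, pairwise orthogonal nonpositive vectors span a nonpositive space. -/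
theorem NonposBound.orthogonal {G : SimpleGraph V} {S : Finset V} {k n : ℕ}
    (h : G.NonposBound S k) (w : Fin n → V → ℝ) (hw : ∀ i, w i ∈ suppOn S)
    (hl : LinearIndependent ℝ w) (hq : ∀ i, G.bf (w i) (w i) ≤ 0)
    (ho : ∀ i j, i < j → G.bf (w i) (w j) = 0) : n ≤ k := by
  have hr := finrank_span_eq_card hl
  rw [Fintype.card_fin] at hr
  rw [← hr]
  refine h _ (Submodule.span_le.2 (by rintro _ ⟨i, rfl⟩; exact hw i)) fun x hx => ?_
  obtain ⟨c, rfl⟩ := (Submodule.mem_span_range_iff_exists_fun ℝ).1 hx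
  have ho' : ∀ i j, i ≠ j → G.bf (w i) (w j) = 0 := by
    intro i j hij
    rcases lt_or_gt_of_ne hij with hlt | hlt
    · exact ho i j hlt
    · rw [bf_comm, ho j i hlt]
  simp only [map_sum, map_smul, LinearMap.sum_apply, LinearMap.smul_apply, smul_eq_mul]
  refine sum_nonpos fun j _ => ?_
  rw [mul_sum, sum_eq_single j]
  · nlinarith [hq j, sq_nonneg (c j)]
  · intro i _ hij
    rw [ho' _ _ hij]; ring
  · simp

open Classical in
/-- The indicator function of the neighbourhood of `u` on the rim `r`. -/
noncomputable def rimBits (G : SimpleGraph V) (r : Fin 5 → V) (u : V) (k : Fin 5) : Bool :=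
  decide (G.Adj u (r k))

theorem rimBits_iff {G : SimpleGraph V} {r : Fin 5 → V} {u : V} {k : Fin 5} :
    G.rimBits r u k = true ↔ G.Adj u (r k) := by
  simp [rimBits]

/-- If `u`, `u'` are neighbours of `v`, and `v` misses the `5`-cycle `r`, then correcting
`ev u - ev u'` by a vector on the cycle makes it orthogonal to the cycle and to `v`. The value of the
form there is at most `-1/2` times `rimForm`, and the cycle and `v` already carry a
three-dimensional nonpositive space. -/
theorem NonposBound.rimForm_neg {G : SimpleGraph V} {S : Finset V} (h : G.NonposBound S 3)
    {r : Fin 5 → V} (hinj : Function.Injective r) (hrS : ∀ i, r i ∈ S)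
    (hr : ∀ i j, G.Adj (r i) (r j) ↔ j = i + 1 ∨ i = j + 1) {v u u' : V} (hv : v ∈ S)
    (hvr : ∀ i, v ≠ r i ∧ ¬ G.Adj v (r i)) (hu : u ∈ S) (hu' : u' ∈ S) (huu : u ≠ u')
    (vu : G.Adj v u) (vu' : G.Adj v u') :
    rimForm (G.rimBits r u) (G.rimBits r u') < 0 := by
  classical
  by_contra! hf
  have hur : ∀ i, u ≠ r i := fun i e => (hvr i).2 (e ▸ vu)
  have hur' : ∀ i, u' ≠ r i := fun i e => (hvr i).2 (e ▸ vu')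
  have hX : ∀ w i, G.bf (ev (r i)) (ev w) = ((G.rimBits r w i).toInt : ℝ) := by
    intro w i
    rw [bf_comm, bf_ev, rimBits]
    split_ifs with hh <;> simp [hh]
  have hX' : ∀ w i, G.bf (ev w) (ev (r i)) = ((G.rimBits r w i).toInt : ℝ) := by
    intro w i
    rw [bf_comm, hX]
  have hR : ∀ i j, ((G.rimBits r (r i) j).toInt : ℝ) = if j = i + 1 ∨ i = j + 1 then 1 else 0 := by
    intro i j
    rw [← hX', bf_ev]
    simp only [hr]
  have hV : ∀ i, ((G.rimBits r v i).toInt : ℝ) = 0 := by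
    intro i
    rw [← hX', bf_ev_not (hvr i).2]
  have hf' : (0 : ℝ) ≤ (rimForm (G.rimBits r u) (G.rimBits r u') : ℤ) := by exact_mod_cast hf
  simp only [rimForm] at hf'
  push_cast at hf'
  generalize hx : (fun i => ((G.rimBits r u i).toInt : ℝ) - ((G.rimBits r u' i).toInt : ℝ)) = x
    at hf'
  have hx' : ∀ i, ((G.rimBits r u i).toInt : ℝ) = x i + ((G.rimBits r u' i).toInt : ℝ) := by
    intro i; rw [← hx]; ring
  simp only [hx'] at hf'
  have A1 : G.bf (ev u) (ev u) = 0 := bf_ev_self G u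
  have A2 : G.bf (ev u') (ev u') = 0 := bf_ev_self G u'
  have A3 : G.bf (ev v) (ev v) = 0 := bf_ev_self G v
  have A4 : G.bf (ev u') (ev u) = G.bf (ev u) (ev u') := bf_comm _ _ _
  have A5 : 0 ≤ G.bf (ev u) (ev u') := by rw [bf_ev]; split_ifs <;> norm_num
  have A6 := bf_ev_adj vu
  have A7 := bf_ev_adj vu'
  let s : ℝ := (x 0 + x 1 + x 2 + x 3 + x 4) / 2
  let z : V → ℝ := ev u - ev u' - (x 4 + x 0 + x 1 - s) • ev (r 0) -
    (x 0 + x 1 + x 2 - s) • ev (r 1) - (x 1 + x 2 + x 3 - s) • ev (r 2) -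
    (x 2 + x 3 + x 4 - s) • ev (r 3) - (x 3 + x 4 + x 0 - s) • ev (r 4)
  have hzr : ∀ i, G.bf (ev (r i)) z = 0 := by
    intro i
    fin_cases i <;> simp [z, hX, hR, hx', s] <;> ring
  have hzv : G.bf (ev v) z = 0 := by
    simp [z, hX', hV, A6, A7]
  have hz : G.bf z z ≤ 0 := by
    have h1 : G.bf z z = G.bf (ev u) z - G.bf (ev u') z := by
      have h2 : ∀ t, G.bf z t = G.bf (ev u) t - G.bf (ev u') t -
          (x 4 + x 0 + x 1 - s) * G.bf (ev (r 0)) t - (x 0 + x 1 + x 2 - s) * G.bf (ev (r 1)) t -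
          (x 1 + x 2 + x 3 - s) * G.bf (ev (r 2)) t - (x 2 + x 3 + x 4 - s) * G.bf (ev (r 3)) t -
          (x 3 + x 4 + x 0 - s) * G.bf (ev (r 4)) t := by
        intro t
        simp only [z, map_sub, map_smul, LinearMap.sub_apply, LinearMap.smul_apply, smul_eq_mul]
      rw [h2 z]
      simp only [hzr, mul_zero, sub_zero]
    rw [h1]
    simp only [z, map_sub, map_smul, A1, A2, A4, hX', hx', smul_eq_mul, s]
    nlinarith
  -- the two vectors in the middle are an orthogonal basis of a negative definite plane on the cycle
  have := h.orthogonal (n := 4)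
    ![ev v, ev (r 0) - ev (r 1), (2 : ℝ) • (ev (r 2) - ev (r 3)) - (ev (r 0) - ev (r 1)), z]
    ?_ ?_ ?_ ?_
  · omega
  · have hR' := fun i => ev_mem (hrS i)
    intro i
    fin_cases i
    · exact ev_mem hv
    · exact sub_mem (hR' _) (hR' _)
    · exact sub_mem (Submodule.smul_mem _ _ (sub_mem (hR' _) (hR' _))) (sub_mem (hR' _) (hR' _))
    · refine sub_mem (sub_mem (sub_mem (sub_mem (sub_mem (sub_mem (ev_mem hu) (ev_mem hu')) ?_) ?_)
        ?_) ?_) ?_ <;> exact Submodule.smul_mem _ _ (hR' _)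
  · rw [Fintype.linearIndependent_iff]
    intro g hg
    have hu0 := congrFun hg u
    have hv0 := congrFun hg v
    have h20 := congrFun hg (r 2)
    have h00 := congrFun hg (r 0)
    simp [Fin.sum_univ_four, z, ev_apply, hur, vu.ne', huu] at hu0
    simp [Fin.sum_univ_four, z, ev_apply, hvr, vu.ne, vu'.ne, hu0] at hv0
    simp [Fin.sum_univ_four, ev_apply, hinj.eq_iff, hu0, hv0] at h20
    simp [Fin.sum_univ_four, ev_apply, hinj.eq_iff, hu0, hv0, h20] at h00
    intro i
    fin_cases i <;> simp [*]
  · intro i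
    fin_cases i
    · exact A3.le
    · simp [hX, hR]
    · simp [hX, hR]; norm_num
    · exact hz
  · intro i j hij
    fin_cases i <;> fin_cases j <;> first
      | (exfalso; revert hij; decide)
      | (simp [hX', hV, hR]; done)
      | (simp [hX', hR]; norm_num; done)
      | (simp [hzr, hzv])

/-- The minor of `HasK5.of_rim`, with incidences given by `rimBits` and the cycle rotated by `i`. -/
theorem HasK5.of_rimPattern {G : SimpleGraph V} {r : Fin 5 → V} (hinj : Function.Injective r)
    (hr : ∀ i j, G.Adj (r i) (r j) ↔ j = i + 1 ∨ i = j + 1) {v a b c : V}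
    (hvr : ∀ i, v ≠ r i ∧ ¬ G.Adj v (r i)) (va : G.Adj v a) (vb : G.Adj v b) (vc : G.Adj v c)
    (hac : a ≠ c) (hbc : b ≠ c) {i : Fin 5}
    (h : rimPattern (G.rimBits r a) (G.rimBits r b) (G.rimBits r c) i = true) : G.HasK5 := by
  have hne : ∀ {u}, G.Adj v u → ∀ i, u ≠ r i := fun vu i e => (hvr i).2 (e ▸ vu)
  simp only [rimPattern, Bool.and_eq_true, rimBits_iff] at h
  obtain ⟨⟨⟨⟨⟨a2, a4⟩, b3⟩, c0⟩, c2⟩, c3⟩ := h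
  have off : ∀ {u}, (∀ i, u ≠ r i) → u ∉ [r i, r (1 + i), r (2 + i), r (3 + i), r (4 + i)] := by
    intro u hu
    simp [hu]
  refine HasK5.of_rim (r1 := r (1 + i)) va vb vc ?_ ?_ ?_ ?_ ?_ (off fun i => (hvr i).1)
    (off (hne va)) (off (hne vb)) (off (hne vc)) hac hbc ?_ a2 a4 b3 c0 c2 c3
  iterate 5 (rw [hr]; clear * -; revert i; decide)
  simp only [hinj.ne_iff]
  clear * -
  revert i; decide

end SimpleGraph

/-! ### Negative index three and beyond -/

namespace SimpleGraph

variable {V : Type*} [Fintype V]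

/-- Two neighbours of `v` cannot have the same neighbours in a non-adjacent pair of
non-neighbours of `v`. -/
theorem NonposBound.eq_of_same_nbrs {G : SimpleGraph V} {S : Finset V} (h : G.NonposBound S 3)
    {v w w' u u' : V} (hv : v ∈ S) (hw : w ∈ S) (hw' : w' ∈ S) (hu : u ∈ S) (hu' : u' ∈ S)
    (hwv : w ≠ v) (hwv' : w' ≠ v) (hww : w ≠ w') (vw : ¬ G.Adj v w) (vw' : ¬ G.Adj v w')
    (ww : ¬ G.Adj w w') (vu : G.Adj v u) (vu' : G.Adj v u') (e : G.Adj u w ↔ G.Adj u' w)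
    (e' : G.Adj u w' ↔ G.Adj u' w') : u = u' := by
  classical
  by_contra hne
  have := h.indep_extend (I := {v, w, w'}) (z := ev u - ev u') (by simp [insert_subset_iff, *])
    (by simp [*, G.adj_comm w v, G.adj_comm w' v, G.adj_comm w' w])
    (sub_mem (ev_mem hu) (ev_mem hu')) ⟨u, ?_, by simp [ev_of_ne hne]⟩ ?_ ?_
  · rw [card_eq_three.2 ⟨v, w, w', hwv.symm, hwv'.symm, hww, rfl⟩] at this
    omega
  · simp only [mem_insert, mem_singleton, not_or]
    exact ⟨vu.ne', fun e => vw (e ▸ vu), fun e => vw' (e ▸ vu)⟩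
  · by_cases a : G.Adj u u'
    · simp [bf_ev, a, a.symm]
    · simp [bf_ev, a, G.adj_comm u' u]
  · simp only [mem_insert, mem_singleton, forall_eq_or_imp, forall_eq, map_sub, bf_ev,
      G.adj_comm w, G.adj_comm w', e, e', vu, vu']
    simp

open Classical in
/-- Minimum degree `4` on nine vertices: every vertex outside the neighbourhood of a vertex `v` of
degree `4` would miss at most one of the others, so the zero-sum vectors on the four non-neighbours
and `ev v` would span a nonpositive space of dimension `4`. -/
theorem NonposBound.degree_ne_four {G : SimpleGraph V} {S : Finset V}
    (h : G.NonposBound S 3) (hS : #S = 9)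
    {v : V} (hv : v ∈ S) (hd : #{u ∈ S | G.Adj v u} = 4)
    (hmin : ∀ w ∈ S, 4 ≤ #{u ∈ S | G.Adj w u}) : False := by
  have hc := G.card_nbrs_nonnbrs hv
  rw [hS] at hc
  set W : Finset V := {w ∈ S | w ≠ v ∧ ¬ G.Adj v w} with hW
  have hWc : #W = 4 := by omega
  have hWS : W ⊆ S := filter_subset _ _
  have key : ∀ w ∈ W, #{b ∈ W | b ≠ w ∧ ¬ G.Adj w b} ≤ 1 := by
    intro w hw
    by_contra! hlt
    obtain ⟨w', hw'⟩ := card_pos.1 (by omega : 0 < #{b ∈ W | b ≠ w ∧ ¬ G.Adj w b})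
    simp only [hW, mem_filter] at hw hw'
    obtain ⟨⟨hw'S, hw'v, vw'⟩, hww, ww⟩ := hw'
    obtain ⟨hwS, hwv, vw⟩ := hw
    -- at most two neighbours of `v` are adjacent to `w`, being separated by `w'`
    have h2 : #{u ∈ S | G.Adj v u ∧ G.Adj w u} ≤ 2 := by
      by_contra! h3
      obtain ⟨a, ha, b, hb, c, hc, hab, hac, hbc⟩ := two_lt_card.1 h3
      simp only [mem_filter] at ha hb hc
      obtain ⟨haS, va, wa⟩ := ha
      obtain ⟨hbS, vb, wb⟩ := hb
      obtain ⟨hcS, vc, wc⟩ := hc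
      have same : ∀ {u u'}, u ∈ S → u' ∈ S → G.Adj v u → G.Adj v u' → G.Adj w u → G.Adj w u' →
          (G.Adj u w' ↔ G.Adj u' w') → u = u' := fun hu hu' vu vu' wu wu' e =>
        h.eq_of_same_nbrs hv hwS hw'S hu hu' hwv hw'v hww.symm vw vw' ww vu vu'
          (iff_of_true wu.symm wu'.symm) e
      by_cases eab : G.Adj a w' ↔ G.Adj b w'
      · exact hab (same haS hbS va vb wa wb eab)
      by_cases eac : G.Adj a w' ↔ G.Adj c w'
      · exact hac (same haS hcS va vc wa wc eac)
      exact hbc (same hbS hcS vb vc wb wc (by tauto))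
    have h3 : #{u ∈ S | G.Adj w u} ≤ #{u ∈ S | G.Adj v u ∧ G.Adj w u} + #{u ∈ W | G.Adj w u} := by
      refine (card_le_card ?_).trans (card_union_le _ _)
      intro u hu
      simp only [mem_filter, mem_union, hW] at hu ⊢
      by_cases vu : G.Adj v u
      · exact .inl ⟨hu.1, vu, hu.2⟩
      · exact .inr ⟨⟨hu.1, fun e => vw (e ▸ hu.2).symm, vu⟩, hu.2⟩
    have h4 := hmin w hwS
    have h5 := G.card_nbrs_nonnbrs (S := W) (v := w) (by simp [*])
    omega
  have := h.zeroSum_extend hWS (by convert key) (z := ev v) (ev_mem hv) ⟨v, by simp [hW], by simp⟩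
    (bf_ev_self G v).le 0 fun t ht => bf_ev_not fun e => (mem_filter.1 ht).2.2 e.symm
  omega

/-- A vertex of minimum degree has degree at most `4` by Mader's bound, and at least `3` since its
non-neighbours number at most `5`. In degree `3` the five non-neighbours form a `5`-cycle, and the
three neighbours act as hubs that complete a `K₅` minor. -/
theorem NonposBound.three {G : SimpleGraph V} (hG : ¬ G.HasK5) {S : Finset V}
    (h : G.NonposBound S 3) : #S ≠ 9 := by
  classical
  intro hS
  obtain ⟨v, hv, hmin⟩ := exists_min_image S (fun v => #{u ∈ S | G.Adj v u})
    (card_pos.1 (by omega))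
  have hsum := G.sum_degree_le hG S (by omega)
  have hd : #{u ∈ S | G.Adj v u} ≤ 4 := by
    by_contra! hd
    have h5 : ∑ w ∈ S, 5 ≤ ∑ w ∈ S, #{u ∈ S | G.Adj w u} :=
      sum_le_sum fun w hw => Nat.succ_le_of_lt (hd.trans_le (hmin w hw))
    rw [sum_const, smul_eq_mul, hS] at h5
    omega
  have hc := G.card_nbrs_nonnbrs hv
  have hW := h.nonneighbors hv
  have hW5 := hW.two
  have hd4 : #{u ∈ S | G.Adj v u} ≠ 4 := fun h4 =>
    h.degree_ne_four hS hv h4 fun w hw => h4 ▸ hmin w hw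
  have hd3 : #{u ∈ S | G.Adj v u} = 3 := by omega
  obtain ⟨r, hinj, hrW, hr⟩ := hW.exists_cycle (by omega)
  simp only [mem_filter] at hrW
  have hvr : ∀ i, v ≠ r i ∧ ¬ G.Adj v (r i) := fun i => ⟨(hrW i).2.1.symm, (hrW i).2.2⟩
  obtain ⟨a, b, c, hab, hac, hbc, hN⟩ := card_eq_three.1 hd3
  have hu : ∀ u ∈ ({a, b, c} : Finset V), u ∈ S ∧ G.Adj v u := by
    intro u hu
    rwa [← hN, mem_filter] at hu
  obtain ⟨haS, va⟩ := hu a (by simp)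
  obtain ⟨hbS, vb⟩ := hu b (by simp)
  obtain ⟨hcS, vc⟩ := hu c (by simp)
  have form := fun {u u' : V} => h.rimForm_neg (u := u) (u' := u') hinj (fun i => (hrW i).1) hr hv hvr
  have pat := fun {a b c : V} => HasK5.of_rimPattern (a := a) (b := b) (c := c) hinj hr hvr
  obtain ⟨i, hi⟩ := rimPatterns_of_form _ _ _ (form haS hbS hab va vb) (form haS hcS hac va vc)
    (form hbS hcS hbc vb vc)
  rcases hi with hi | hi | hi | hi | hi | hi
  · exact hG (pat va vb vc hac hbc hi)
  · exact hG (pat va vc vb hab hbc.symm hi)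
  · exact hG (pat vb va vc hbc hac hi)
  · exact hG (pat vb vc va hab.symm hac.symm hi)
  · exact hG (pat vc va vb hbc.symm hab hi)
  · exact hG (pat vc vb va hac.symm hab.symm hi)

theorem NegBound.three {G : SimpleGraph V} (hG : ¬ G.HasK5) {S : Finset V}
    (h : G.NegBound S 3) : G.PosBound S 5 := by
  by_contra hp
  obtain ⟨S', hc, hn⟩ := NegBound.critical (k := 2) (b := 5)
    (fun S h => (NegBound.two h).mono_right (by omega)) h hp
  exact hn.three hG hc

theorem NegBound.add_three {G : SimpleGraph V} (hG : ¬ G.HasK5) (n : ℕ) :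
    ∀ S, G.NegBound S (n + 3) → G.PosBound S (5 * n + 5) := by
  induction n with
  | zero => exact fun _ => NegBound.three hG
  | succ n ih => exact fun _ => NegBound.step hG ih

/-- The bounds are `0, 1, 3, 5, 10, 15, …`. -/
theorem NegBound.posBound {G : SimpleGraph V} (hG : ¬ G.HasK5) (k : ℕ) :
    ∃ b, 2 * b ≤ k * (k + 1) ∧ ∀ S, G.NegBound S k → G.PosBound S b := by
  match k with
  | 0 => exact ⟨0, by norm_num, fun _ => NegBound.zero⟩
  | 1 => exact ⟨1, by norm_num, fun _ => NegBound.one⟩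
  | 2 => exact ⟨3, by norm_num, fun _ => NegBound.two⟩
  | n + 3 =>
    refine ⟨5 * n + 5, ?_, NegBound.add_three hG n⟩
    -- `(n + 3) (n + 4) - 10 (n + 1) = (n - 1) (n - 2)`
    match n with
    | 0 => norm_num
    | m + 1 => nlinarith [Nat.le_self_pow two_ne_zero m]

/-! ### Inertia and definite subspaces -/

theorem bf_eq_dotProduct [DecidableEq V] (G : SimpleGraph V) [DecidableRel G.Adj] (x y : V → ℝ) :
    G.bf x y = x ⬝ᵥ (G.adjMatrix ℝ).mulVec y := by
  have : G.bf = Matrix.toBilin' (G.adjMatrix ℝ) := by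
    unfold bf
    congr!
  rw [this, Matrix.toBilin'_apply']

section Spectral

variable [DecidableEq V] (G : SimpleGraph V) [DecidableRel G.Adj]

/-- The span of the eigenvectors whose index lies in `J`. -/
noncomputable def eigSpan (J : Set V) : Submodule ℝ (V → ℝ) :=
  Submodule.span ℝ (Set.range fun i : J => (G.adjHerm.eigenvectorBasis i : V → ℝ))

theorem eigen_dotProduct (i j : V) :
    (G.adjHerm.eigenvectorBasis i : V → ℝ) ⬝ᵥ (G.adjHerm.eigenvectorBasis j : V → ℝ) =
      if i = j then 1 else 0 := by
  have := orthonormal_iff_ite.1 G.adjHerm.eigenvectorBasis.orthonormal j i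
  rw [EuclideanSpace.inner_eq_star_dotProduct] at this
  simpa [eq_comm] using this

theorem bf_eigen (i j : V) :
    G.bf (G.adjHerm.eigenvectorBasis i) (G.adjHerm.eigenvectorBasis j) =
      if i = j then G.adjHerm.eigenvalues i else 0 := by
  rw [bf_eq_dotProduct, G.adjHerm.mulVec_eigenvectorBasis, dotProduct_smul, eigen_dotProduct]
  split_ifs with h <;> simp [h]

theorem finrank_eigSpan (J : Set V) : Module.finrank ℝ (G.eigSpan J) = Nat.card J := by
  classical
  rw [eigSpan, finrank_span_eq_card, Nat.card_eq_fintype_card]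
  rw [Fintype.linearIndependent_iff]
  intro g hg i
  have := congrArg (fun t => (G.adjHerm.eigenvectorBasis i : V → ℝ) ⬝ᵥ t) hg
  simpa [dotProduct_sum, eigen_dotProduct, Subtype.coe_inj] using this

open Classical in
theorem exists_of_mem_eigSpan {J : Set V} {x : V → ℝ} (hx : x ∈ G.eigSpan J) :
    ∃ c : J → ℝ, x = ∑ i, c i • (G.adjHerm.eigenvectorBasis i : V → ℝ) ∧
      G.bf x x = ∑ i, c i ^ 2 * G.adjHerm.eigenvalues i := by
  obtain ⟨c, rfl⟩ := (Submodule.mem_span_range_iff_exists_fun ℝ).1 hx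
  refine ⟨c, rfl, ?_⟩
  simp only [map_sum, map_smul, LinearMap.sum_apply, LinearMap.smul_apply, smul_eq_mul, bf_eigen,
    Subtype.coe_inj]
  simp [sq, mul_assoc]

theorem card_pos_le {b : ℕ} (h : G.PosBound univ b) :
    Nat.card {v // 0 < G.adjHerm.eigenvalues v} ≤ b := by
  change Nat.card {v | 0 < G.adjHerm.eigenvalues v} ≤ b
  rw [← G.finrank_eigSpan {v | 0 < G.adjHerm.eigenvalues v}]
  refine h _ (fun x _ v hv => (hv (mem_univ v)).elim) fun x hx h0 => ?_
  obtain ⟨c, rfl, hq⟩ := G.exists_of_mem_eigSpan hx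
  rw [hq]
  have : ∃ i, c i ≠ 0 := by
    by_contra! hc
    simp [hc] at h0
  obtain ⟨i, hi⟩ := this
  exact sum_pos' (fun j _ => mul_nonneg (sq_nonneg _) (le_of_lt j.2))
    ⟨i, mem_univ _, mul_pos (by positivity) i.2⟩

theorem negBound_card : G.NegBound univ (Nat.card {v // G.adjHerm.eigenvalues v < 0}) := by
  intro L hL hn
  have h1 := finrank_add_le (S := univ) (Q := G.eigSpan {v | ¬ G.adjHerm.eigenvalues v < 0}) hL
    (fun x _ v hv => (hv (mem_univ v)).elim) ?_
  · rw [finrank_eigSpan, card_univ, ← Nat.card_eq_fintype_card] at h1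
    have h2 := Nat.card_congr (Equiv.sumCompl fun v => G.adjHerm.eigenvalues v < 0)
    rw [Nat.card_sum] at h2
    change _ + Nat.card {v // ¬ G.adjHerm.eigenvalues v < 0} ≤ _ at h1
    omega
  · intro x hx hx'
    by_contra h0
    obtain ⟨c, rfl, hq⟩ := G.exists_of_mem_eigSpan hx'
    have := hn _ hx h0
    rw [hq] at this
    exact this.not_ge (sum_nonneg fun j _ => mul_nonneg (sq_nonneg _) (not_lt.1 j.2))

end Spectral

end SimpleGraph

end Combinatorics

theorem stmt6 {V : Type*} [Finite V] (G : SimpleGraph V) (hplanar : G.IsPlanar) :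
    2 * G.posInertia ≤ G.negInertia * (G.negInertia + 1) := by
  let := Fintype.ofFinite V
  let := Classical.decEq V
  let : DecidableRel G.Adj := Classical.decRel _
  obtain ⟨b, hb, hS⟩ := SimpleGraph.NegBound.posBound hplanar.not_hasK5 G.negInertia
  exact (Nat.mul_le_mul_left 2 (G.card_pos_le (hS _ G.negBound_card))).trans hb
end

section
/- For any finite simple graph G of order n with adjacency eigenvalues λ₁(G) ≥ ⋯ ≥ λₙ(G), one has n⁺(G) ≤ n⁻(G)·(2·|λₙ(G)| − 1). -/
/-!
The nonzero adjacency eigenvalues have a nonzero integer product, because it is, up to sign, the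
trailing coefficient of the characteristic polynomial of an integer matrix. Hence
`∑ log |λ| ≥ 0` over the nonzero eigenvalues, and `log x ≤ x - 1` gives `∑ |λ| ≥ n⁺ + n⁻`.
As the trace is zero, `∑ |λ|` is twice the sum of `|λ|` over the negative eigenvalues, so it is at
most `2 n⁻ |λₙ|`. Comparing the two bounds yields `n⁺ + n⁻ ≤ 2 n⁻ |λₙ|`.
-/

open Matrix

/-- The least adjacency eigenvalue `λₙ(G)` of a finite nonempty simple graph. -/
noncomputable def SimpleGraph.lambdaMin {V : Type*} [Fintype V] [Nonempty V]
    (G : SimpleGraph V) : ℝ :=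
  letI := Classical.decEq V
  letI : DecidableRel G.Adj := Classical.decRel _
  ⨅ v : V, G.adjHerm.eigenvalues v

/-- The largest adjacency eigenvalue `λ₁(G)` of a finite nonempty simple graph. -/
noncomputable def SimpleGraph.lambdaMax {V : Type*} [Fintype V] [Nonempty V]
    (G : SimpleGraph V) : ℝ :=
  letI := Classical.decEq V
  letI : DecidableRel G.Adj := Classical.decRel _
  ⨆ v : V, G.adjHerm.eigenvalues v

/-- The nonzero adjacency eigenvalues of a graph have a nonzero integer product, namely
(up to sign) the trailing coefficient of the characteristic polynomial. Zero eigenvalues are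
replaced by the factor `1`. -/
theorem SimpleGraph.one_le_prod_nonzero_eigenvalues {V : Type*} [Fintype V] [DecidableEq V]
    (G : SimpleGraph V) [DecidableRel G.Adj] :
    1 ≤ ∏ v, (if G.adjHerm.eigenvalues v = 0 then (1 : ℝ) else |G.adjHerm.eigenvalues v|) := by
  have hmap : (G.adjMatrix ℤ).map (Int.castRingHom ℝ) = G.adjMatrix ℝ := by
    ext i j
    simp [SimpleGraph.adjMatrix_apply]
  have hp : (G.adjMatrix ℤ).charpoly.map (Int.castRingHom ℝ) = (G.adjMatrix ℝ).charpoly := by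
    rw [← hmap, Matrix.charpoly_map]
  have htr : (((G.adjMatrix ℤ).charpoly.trailingCoeff : ℤ) : ℝ)
      = (G.adjMatrix ℝ).charpoly.trailingCoeff := by
    have hdeg : ((G.adjMatrix ℤ).charpoly.map (Int.castRingHom ℝ)).natTrailingDegree
        = (G.adjMatrix ℤ).charpoly.natTrailingDegree := by
      unfold Polynomial.natTrailingDegree Polynomial.trailingDegree
      rw [Polynomial.support_map_of_injective _ (Int.castRingHom ℝ).injective_int]
    rw [← hp, Polynomial.trailingCoeff, Polynomial.trailingCoeff, hdeg, Polynomial.coeff_map]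
    simp
  have hne : (G.adjMatrix ℤ).charpoly.trailingCoeff ≠ 0 :=
    Polynomial.trailingCoeff_nonzero_iff_nonzero.mpr (Matrix.charpoly_monic _).ne_zero
  have hprod : |(G.adjMatrix ℝ).charpoly.trailingCoeff|
      = ∏ v, (if G.adjHerm.eigenvalues v = 0 then (1 : ℝ) else |G.adjHerm.eigenvalues v|) := by
    rw [G.adjHerm.charpoly_eq]
    have hmul : ∀ s : Finset V, (∏ i ∈ s, (Polynomial.X -
        Polynomial.C ((G.adjHerm.eigenvalues i : ℝ)))).trailingCoeff
        = ∏ i ∈ s, (Polynomial.X - Polynomial.C (G.adjHerm.eigenvalues i)).trailingCoeff := by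
      intro s
      induction s using Finset.induction_on with
      | empty => simp [Polynomial.trailingCoeff]
      | insert a s ha ih =>
        rw [Finset.prod_insert ha, Finset.prod_insert ha, Polynomial.trailingCoeff_mul, ih]
    refine (congrArg abs (hmul Finset.univ)).trans ?_
    rw [Finset.abs_prod]
    refine Finset.prod_congr rfl fun v _ => ?_
    split_ifs with h
    · rw [h]
      simp [Polynomial.trailingCoeff]
    · have hdeg : (Polynomial.X - Polynomial.C (G.adjHerm.eigenvalues v)).natTrailingDegree = 0 :=
        Polynomial.natTrailingDegree_eq_zero.mpr (Or.inr (by simpa using h))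
      rw [Polynomial.trailingCoeff, hdeg]
      simp
  rw [← hprod, ← htr, ← Int.cast_abs]
  exact_mod_cast Int.one_le_abs hne

theorem SimpleGraph.sum_eigenvalues_eq_zero {V : Type*} [Fintype V] [DecidableEq V]
    (G : SimpleGraph V) [DecidableRel G.Adj] : ∑ v, G.adjHerm.eigenvalues v = 0 := by
  have h := G.adjHerm.trace_eq_sum_eigenvalues
  rw [SimpleGraph.trace_adjMatrix] at h
  simpa using h.symm

theorem stmt7 {V : Type*} [Fintype V] [Nonempty V] (G : SimpleGraph V) :
    (G.posInertia : ℝ) ≤ (G.negInertia : ℝ) * (2 * |G.lambdaMin| - 1) := by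
  classical
  rename_i instF _
  unfold SimpleGraph.posInertia SimpleGraph.negInertia SimpleGraph.lambdaMin
  -- The inertias use `Fintype.ofFinite V`; identify it with the given instance.
  have hF : Fintype.ofFinite V = instF := Subsingleton.elim _ _
  rw [hF]
  let := Classical.decEq V
  let : DecidableRel G.Adj := Classical.decRel _
  have h1 := G.one_le_prod_nonzero_eigenvalues
  have h0 := G.sum_eigenvalues_eq_zero
  have hmin : ∀ v, (⨅ v : V, G.adjHerm.eigenvalues v) ≤ G.adjHerm.eigenvalues v :=
    fun v => ciInf_le (Set.finite_range _).bddBelow v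
  revert h1 h0 hmin
  generalize G.adjHerm.eigenvalues = e
  intro h1 h0 hmin
  generalize (⨅ v : V, e v) = m at *
  have hpos : ∀ v, 0 < (if e v = 0 then (1 : ℝ) else |e v|) := by
    intro v
    split_ifs with h
    · exact one_pos
    · exact abs_pos.mpr h
  -- AM-GM in the form `log x ≤ x - 1`, summed over all eigenvalues.
  have hsum : 0 ≤ ∑ v, ((if e v = 0 then (1 : ℝ) else |e v|) - 1) := by
    calc (0 : ℝ) ≤ Real.log (∏ v, (if e v = 0 then (1 : ℝ) else |e v|)) := Real.log_nonneg h1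
      _ = ∑ v, Real.log (if e v = 0 then (1 : ℝ) else |e v|) :=
        Real.log_prod fun v _ => (hpos v).ne'
      _ ≤ _ := Finset.sum_le_sum fun v _ => Real.log_le_sub_one_of_pos (hpos v)
  -- Subtracting `e v`, whose total is zero, doubles the negative part and removes the positive one.
  have hpt : ∀ v, (if e v = 0 then (1 : ℝ) else |e v|) - 1 - e v
      ≤ (if e v < 0 then (1 : ℝ) else 0) * (2 * |m| - 1) - (if 0 < e v then (1 : ℝ) else 0) := by
    intro v
    rcases lt_trichotomy (e v) 0 with h | h | h
    · have := hmin v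
      have := neg_le_abs m
      rw [if_neg h.ne, if_pos h, if_neg h.le.not_gt, abs_of_neg h]
      linarith
    · simp [h]
    · rw [if_neg h.ne', if_neg h.le.not_gt, if_pos h, abs_of_pos h]
      linarith
  have hfin := Finset.sum_le_sum fun v (_ : v ∈ Finset.univ) => hpt v
  rw [Finset.sum_sub_distrib _ e, h0, Finset.sum_sub_distrib (fun v => _ * _), ← Finset.sum_mul,
    Finset.sum_boole, Finset.sum_boole] at hfin
  rw [Nat.card_eq_fintype_card, Nat.card_eq_fintype_card, Fintype.card_subtype,
    Fintype.card_subtype]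
  linarith
end

section
/- For any finite simple graph G of order n with adjacency eigenvalues λ₁(G) ≥ ⋯ ≥ λₙ(G), if λ₁(G) ≥ 3.3, then n⁺(G) ≤ n⁻(G)·(2·|λₙ(G)| − 1) − 1.1. -/
/-!
The bound follows from two facts about the adjacency eigenvalues `λ`: they sum to `0` (trace), and
the product of the nonzero ones is, up to sign, the lowest nonzero coefficient of the
characteristic polynomial. That coefficient is a nonzero integer, so `∑ log |λ| ≥ 0`.

Since `log x ≤ x - 1`, each positive eigenvalue satisfies `1 ≤ λ - log λ`, and the largest one
satisfies `2.1 ≤ λ₁ - log λ₁` because `λ₁ ≥ 3.3` and `log 3.3 ≤ 1.2`. Hence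
`n⁺ + 1.1 ≤ ∑_{λ > 0} (λ - log λ) ≤ ∑_{λ < 0} (|λ| + log |λ|) ≤ ∑_{λ < 0} (2 |λ| - 1)`,
and the last sum is at most `n⁻ (2 |λₙ| - 1)`.
-/

open Matrix

open Polynomial in
/-- The lowest nonzero coefficient of `∏ (X - c i)`, expressed through the nonzero `c i`. -/
lemma trailingCoeff_prod_X_sub_C {V : Type*} (s : Finset V) (c : V → ℝ) :
    (∏ i ∈ s, (X - C (c i))).trailingCoeff = ∏ i ∈ s, if c i = 0 then 1 else -c i := by
  classical
  induction s using Finset.induction_on with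
  | empty => simp [trailingCoeff]
  | insert a s ha ih =>
    rw [Finset.prod_insert ha, Finset.prod_insert ha, Polynomial.trailingCoeff_mul, ih]
    congr 1
    split_ifs with h
    · simp [h, trailingCoeff]
    · have h0 : (X - C (c a)).coeff 0 ≠ 0 := by simpa using h
      have : (X - C (c a)).natTrailingDegree = 0 :=
        Nat.le_zero.mp (natTrailingDegree_le_of_ne_zero h0)
      simp [trailingCoeff, this]

/-- The integer characteristic polynomial has a nonzero integer as its lowest nonzero coefficient,
so the nonzero eigenvalues have product of absolute value at least `1`. The junk value `log 0 = 0`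
makes the zero eigenvalues disappear from the sum. -/
lemma sum_log_eigenvalues_nonneg {V : Type*} [Fintype V] [DecidableEq V] (G : SimpleGraph V)
    [DecidableRel G.Adj] : 0 ≤ ∑ v, Real.log (G.adjHerm.eigenvalues v) := by
  have hmap : G.adjMatrix ℝ = (G.adjMatrix ℤ).map (Int.castRingHom ℝ) := by
    ext i j
    simp [SimpleGraph.adjMatrix_apply]
  have hcp : ((G.adjMatrix ℤ).charpoly.map (Int.castRingHom ℝ)) =
      ∏ v, (Polynomial.X - Polynomial.C (G.adjHerm.eigenvalues v)) := by
    rw [← Matrix.charpoly_map, ← hmap]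
    exact G.adjHerm.charpoly_eq
  have hinj : Function.Injective (Int.castRingHom ℝ) := Int.cast_injective
  set p := (G.adjMatrix ℤ).charpoly with hp
  have hp0 : p ≠ 0 := (Matrix.charpoly_monic _).ne_zero
  have hdeg : (p.map (Int.castRingHom ℝ)).natTrailingDegree = p.natTrailingDegree := by
    apply le_antisymm
    · apply Polynomial.natTrailingDegree_le_of_ne_zero
      rw [Polynomial.coeff_map]
      exact (map_ne_zero_iff _ hinj).mpr (Polynomial.trailingCoeff_nonzero_iff_nonzero.mpr hp0)
    · apply Polynomial.natTrailingDegree_le_of_ne_zero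
      intro h
      have h1 : (p.map (Int.castRingHom ℝ)).trailingCoeff = 0 := by
        rw [Polynomial.trailingCoeff, Polynomial.coeff_map, h, map_zero]
      exact hp0 ((Polynomial.map_eq_zero_iff hinj).mp (Polynomial.trailingCoeff_eq_zero.mp h1))
  have htc : ((p.trailingCoeff : ℤ) : ℝ)
      = ∏ v, if G.adjHerm.eigenvalues v = 0 then 1 else -G.adjHerm.eigenvalues v := by
    rw [← trailingCoeff_prod_X_sub_C]
    have := congrArg Polynomial.trailingCoeff hcp
    rw [Polynomial.trailingCoeff, hdeg, Polynomial.coeff_map] at this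
    simpa [Polynomial.trailingCoeff] using this
  have hne : p.trailingCoeff ≠ 0 := Polynomial.trailingCoeff_nonzero_iff_nonzero.mpr hp0
  have hone : (1 : ℝ) ≤ |((p.trailingCoeff : ℤ) : ℝ)| := by
    exact_mod_cast Int.one_le_abs hne
  have hlog := Real.log_nonneg hone
  rw [Real.log_abs, htc, Real.log_prod] at hlog
  · refine hlog.trans_eq (Finset.sum_congr rfl fun v _ => ?_)
    split_ifs with h
    · simp [h]
    · exact Real.log_neg_eq_log _
  · intro v _
    split_ifs with h
    · exact one_ne_zero
    · exact neg_ne_zero.mpr h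

lemma log_three_point_three_le : Real.log 3.3 ≤ 1.2 := by
  rw [Real.log_le_iff_le_exp (by norm_num)]
  have h := Real.sum_le_exp_of_nonneg (x := 1.2) (by norm_num) 7
  refine le_trans ?_ h
  norm_num [Finset.sum_range_succ, Nat.factorial]

/-- The inequality for an abstract family of reals with zero sum and nonnegative log-sum. -/
lemma card_pos_le_of_sum {V : Type*} [Fintype V] (e : V → ℝ) (hsum : ∑ v, e v = 0)
    (hlog : 0 ≤ ∑ v, Real.log (e v)) (w : V) (hw : 3.3 ≤ e w) (m : ℝ) (hm : ∀ v, m ≤ e v) :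
    (Nat.card {v // 0 < e v} : ℝ) ≤ (Nat.card {v // e v < 0} : ℝ) * (2 * |m| - 1) - 1.1 := by
  classical
  -- each summand of `0 ≥ ∑ (e v - log (e v))` is bounded below according to its sign
  have key : ∀ v, (if 0 < e v then (1 : ℝ) else 0) - (if e v < 0 then 2 * |m| - 1 else 0)
      + (if v = w then 1.1 else 0) ≤ e v - Real.log (e v) := by
    intro v
    rcases lt_trichotomy (e v) 0 with h | h | h
    · have hvw : v ≠ w := by rintro rfl; linarith
      have h1 := Real.log_le_sub_one_of_pos (neg_pos.mpr h)
      rw [Real.log_neg_eq_log] at h1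
      have hmv := hm v
      rw [if_neg h.not_gt, if_pos h, if_neg hvw, abs_of_neg (hmv.trans_lt h)]
      linarith
    · have hvw : v ≠ w := by rintro rfl; linarith
      simp [h, hvw]
    · rw [if_pos h, if_neg h.not_gt]
      by_cases hvw : v = w
      · subst hvw
        -- `log` is compared at `e v` and at `3.3` through the tangent line at `3.3`
        have h1 := Real.log_le_sub_one_of_pos (show 0 < e v / 3.3 by positivity)
        rw [Real.log_div h.ne' (by norm_num)] at h1
        have h2 := log_three_point_three_le
        rw [if_pos rfl]
        have h3 : e v / 3.3 - 1 ≤ e v - 3.3 := by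
          rw [div_sub_one (by norm_num), div_le_iff₀ (by norm_num)]
          nlinarith
        linarith
      · have h1 := Real.log_le_sub_one_of_pos h
        rw [if_neg hvw]
        linarith
  have hs := Finset.sum_le_sum fun v (_ : v ∈ Finset.univ) => key v
  rw [Finset.sum_sub_distrib, hsum, Finset.sum_add_distrib, Finset.sum_sub_distrib,
    Finset.sum_ite_eq' Finset.univ w, if_pos (Finset.mem_univ w), ← Finset.sum_filter,
    ← Finset.sum_filter, Finset.sum_const, Finset.sum_const, nsmul_eq_mul, nsmul_eq_mul] at hs
  rw [Nat.card_eq_fintype_card, Nat.card_eq_fintype_card, Fintype.card_subtype,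
    Fintype.card_subtype]
  linarith

theorem stmt8 {V : Type*} [Fintype V] [Nonempty V] (G : SimpleGraph V)
    (hmax : (3.3 : ℝ) ≤ G.lambdaMax) :
    (G.posInertia : ℝ) ≤ (G.negInertia : ℝ) * (2 * |G.lambdaMin| - 1) - 1.1 := by
  classical
  unfold SimpleGraph.posInertia SimpleGraph.negInertia
  unfold SimpleGraph.lambdaMin
  unfold SimpleGraph.lambdaMax at hmax
  -- the inertia counts are defined with their own choice of `Fintype V`
  rename_i hV _
  generalize Fintype.ofFinite V = F
  obtain rfl : F = hV := Subsingleton.elim _ _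
  letI := Classical.decEq V
  letI : DecidableRel G.Adj := Classical.decRel _
  obtain ⟨w, hw⟩ := exists_eq_ciSup_of_finite (f := G.adjHerm.eigenvalues)
  refine card_pos_le_of_sum G.adjHerm.eigenvalues ?_ (sum_log_eigenvalues_nonneg G) w ?_ _
    fun v => ciInf_le (Set.finite_range _).bddBelow v
  · have h := G.adjHerm.trace_eq_sum_eigenvalues
    rw [SimpleGraph.trace_adjMatrix] at h
    simpa using h.symm
  · rw [hw]
    exact hmax
end

section
/- For any finite simple graph G, the energy of G satisfies E(G) ≥ n⁺(G) + n⁻(G), i.e., the sum of the absolute values of the adjacency eigenvalues is at least the rank of the adjacency matrix. -/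
/-!
The characteristic polynomial of the adjacency matrix has integer coefficients, so its lowest
nonzero coefficient is a nonzero integer. Up to sign that coefficient is the product of the nonzero
eigenvalues, hence `∏_{λ ≠ 0} |λ| ≥ 1`. Summing `|λ| - 1 ≥ log |λ|` over the nonzero eigenvalues
gives `E(G) - (n⁺ + n⁻) ≥ log ∏_{λ ≠ 0} |λ| ≥ 0`.
-/


open Matrix

/-- The energy of a graph: the sum of the absolute values of its adjacency eigenvalues. -/
noncomputable def SimpleGraph.energy {V : Type*} [Fintype V] (G : SimpleGraph V) : ℝ :=
  letI := Classical.decEq V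
  letI : DecidableRel G.Adj := Classical.decRel _
  ∑ v : V, |G.adjHerm.eigenvalues v|

open Polynomial in
theorem trailingCoeff_prod_real {V : Type*} (s : Finset V) (f : V → ℝ[X]) :
    (∏ v ∈ s, f v).trailingCoeff = ∏ v ∈ s, (f v).trailingCoeff := by
  classical
  induction s using Finset.induction_on with
  | empty => simp [Polynomial.trailingCoeff]
  | insert a s ha ih => rw [Finset.prod_insert ha, Finset.prod_insert ha,
      Polynomial.trailingCoeff_mul, ih]

open Polynomial in
theorem trailingCoeff_X_sub_C_real (a : ℝ) :
    (X - C a : ℝ[X]).trailingCoeff = if a = 0 then 1 else -a := by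
  split_ifs with h
  · simp [h, Polynomial.trailingCoeff]
  · have h0 : (X - C a : ℝ[X]).coeff 0 ≠ 0 := by simpa using h
    rw [Polynomial.trailingCoeff,
      Polynomial.natTrailingDegree_eq_zero.2 (Or.inr h0)]
    simp

/-- The product of the nonzero eigenvalues has absolute value at least `1`; zero eigenvalues
contribute a factor `1`. -/
theorem one_le_prod_abs_eigenvalues {V : Type*} [Fintype V] [DecidableEq V] (G : SimpleGraph V)
    [DecidableRel G.Adj] :
    1 ≤ ∏ v, (if G.adjHerm.eigenvalues v = 0 then 1 else |G.adjHerm.eigenvalues v|) := by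
  have hmap : (G.adjMatrix ℝ).charpoly =
      (G.adjMatrix ℤ).charpoly.map (Int.castRingHom ℝ) := by
    rw [← Matrix.charpoly_map]
    congr 1
    ext i j
    simp [SimpleGraph.adjMatrix_apply]
  have hne : (G.adjMatrix ℝ).charpoly.trailingCoeff ≠ 0 := by
    rw [Ne, Polynomial.trailingCoeff_eq_zero]
    exact (Matrix.charpoly_monic _).ne_zero
  have hint : ∃ z : ℤ, (G.adjMatrix ℝ).charpoly.trailingCoeff = z := by
    rw [Polynomial.trailingCoeff]
    generalize (G.adjMatrix ℝ).charpoly.natTrailingDegree = k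
    rw [hmap]
    exact ⟨_, by rw [Polynomial.coeff_map]; rfl⟩
  obtain ⟨z, hz⟩ := hint
  have h1 : 1 ≤ |(G.adjMatrix ℝ).charpoly.trailingCoeff| := by
    rw [hz] at hne ⊢
    exact_mod_cast Int.one_le_abs (by exact_mod_cast hne)
  rw [G.adjHerm.charpoly_eq, trailingCoeff_prod_real, Finset.abs_prod] at h1
  refine h1.trans_eq (Finset.prod_congr rfl fun v _ => ?_)
  rw [RCLike.ofReal_real_eq_id, id, trailingCoeff_X_sub_C_real]
  split_ifs <;> simp

theorem stmt9 {V : Type*} [Fintype V] (G : SimpleGraph V) :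
    (G.posInertia : ℝ) + (G.negInertia : ℝ) ≤ G.energy := by
  classical
  unfold SimpleGraph.posInertia SimpleGraph.negInertia SimpleGraph.energy
  -- `posInertia` and `negInertia` use the instance `Fintype.ofFinite V`.
  rw [Subsingleton.elim (Fintype.ofFinite V) ‹Fintype V›]
  let : DecidableEq V := Classical.decEq V
  let : DecidableRel G.Adj := Classical.decRel _
  have key := one_le_prod_abs_eigenvalues G
  change ((Nat.card {v : V // 0 < G.adjHerm.eigenvalues v} : ℕ) : ℝ) +
    ((Nat.card {v : V // G.adjHerm.eigenvalues v < 0} : ℕ) : ℝ) ≤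
      ∑ v : V, |G.adjHerm.eigenvalues v|
  generalize G.adjHerm.eigenvalues = μ at key ⊢
  set g : V → ℝ := fun v => if μ v = 0 then 1 else |μ v| with hg
  have hpos : ∀ v, 0 < g v := fun v => by
    simp only [hg]; split_ifs with h
    · exact one_pos
    · exact abs_pos.2 h
  have hlog : 0 ≤ ∑ v, (g v - 1) := by
    calc 0 ≤ Real.log (∏ v, g v) := Real.log_nonneg key
      _ = ∑ v, Real.log (g v) := Real.log_prod fun v _ => (hpos v).ne'
      _ ≤ _ := Finset.sum_le_sum fun v _ => Real.log_le_sub_one_of_pos (hpos v)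
  have hsum : ∑ v, (g v - 1) = ∑ v, |μ v| -
      (∑ v, (if 0 < μ v then (1 : ℝ) else 0) + ∑ v, (if μ v < 0 then (1 : ℝ) else 0)) := by
    rw [← Finset.sum_add_distrib, ← Finset.sum_sub_distrib]
    refine Finset.sum_congr rfl fun v _ => ?_
    simp only [hg]
    rcases lt_trichotomy (μ v) 0 with h | h | h
    · simp [h, h.ne, h.le]
    · simp [h]
    · simp [h, h.ne', h.le]
  rw [Nat.card_eq_fintype_card, Nat.card_eq_fintype_card, Fintype.card_subtype,
    Fintype.card_subtype]
  simp only [Finset.sum_boole] at hsum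
  linarith
end
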